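/- For every ε > 0 there exists s₀ = s₀(ε) such that for all integers s ≥ s₀, k ≥ 2 and n with n ≥ s + (1.666 + ε)·s·(k−1), one has m(n,k,s) = C(n,k) − C(n−s,k), where C(a,b) denotes the binomial coefficient. -/

import Mathlib

open Finset

/-- The matching number of a family of finite sets: the maximum size of a
subfamily consisting of pairwise disjoint sets. -/
noncomputable def matchingNumber (F : Finset (Finset ℕ)) : ℕ :=
  sSup {t : ℕ | ∃ M : Finset (Finset ℕ), M ⊆ F ∧
    (M : Set (Finset ℕ)).Pairwise (fun A B => Disjoint A B) ∧ M.card = t}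

/-- `maxSizeEMC n k s` is `m(n,k,s)`: the maximum size of a family of
`k`-element subsets of an `n`-element set with no matching of size `s+1`. -/
noncomputable def maxSizeEMC (n k s : ℕ) : ℕ :=
  sSup {t : ℕ | ∃ F : Finset (Finset ℕ), F ⊆ (Finset.range n).powersetCard k ∧
    matchingNumber F ≤ s ∧ F.card = t}

/-! After shifting, a family `F` without `s + 1` disjoint members is controlled by the links
`L i = {G : insert i G ∈ F}`, for `i ≤ s`, of the first `s + 1` vertices on the remaining vertices.
These links form a decreasing chain of shifted families, and they are cross-dependent: no choice of
disjoint `G i ∈ L i` exists for `i = 0, …, s`. Test them against `t ≈ 1.666 s` disjoint random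
blocks of size `k - 1`. By Hall's theorem some `L j` always contains at most `j` blocks, while the
number of blocks in each link has small variance, because shifted families are negatively
correlated. Writing `α i` for the density of `L i`, a Chebyshev estimate thus forces the deficit
`∑ i < s, (1 - α i)` to be at least `(s + 1) * α s` or at least `0.3985 * s + 1`.

The missing sets counted by the deficit have to be weighed against `L s` and the members of `F`
that avoid `{0, …, s}`. Frankl's theorem bounds the latter by `s * #(L s)`, which settles the first
case. In the second case, induction on `k` applied to the link of `s`, the ballot theorem for sets
below a line of slope `1 / (s + 1)` and a centre-of-mass inequality bound the number of members
avoiding `{0, …, s}` by a smaller multiple of a binomial coefficient, which the larger deficit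
outweighs. -/

open scoped FinsetFamily Pointwise BigOperators

section MatchingNumber

variable {F G : Finset (Finset ℕ)}

lemma card_le_matchingNumber {M : Finset (Finset ℕ)} (hM : M ⊆ F)
    (hd : (M : Set (Finset ℕ)).PairwiseDisjoint id) : #M ≤ matchingNumber F := by
  refine le_csSup ⟨#F, ?_⟩ ⟨M, hM, hd, rfl⟩
  rintro _ ⟨M', hM', -, rfl⟩
  exact card_le_card hM'

lemma matchingNumber_le {s : ℕ}
    (h : ∀ M ⊆ F, (M : Set (Finset ℕ)).PairwiseDisjoint id → #M ≤ s) : matchingNumber F ≤ s := by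
  refine csSup_le ⟨0, ∅, empty_subset _, by simp, rfl⟩ ?_
  rintro _ ⟨M, hM, hd, rfl⟩
  exact h M hM hd

lemma matchingNumber_mono (h : F ⊆ G) : matchingNumber F ≤ matchingNumber G :=
  matchingNumber_le fun _ hM hd => card_le_matchingNumber (hM.trans h) hd

lemma card_le_matchingNumber_of_pairwiseDisjoint {ι : Type*} {t : Finset ι} {f : ι → Finset ℕ}
    (hf : ∀ i ∈ t, f i ∈ F) (hne : ∀ i ∈ t, (f i).Nonempty)
    (hd : (t : Set ι).PairwiseDisjoint f) : #t ≤ matchingNumber F := by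
  have hinj : Set.InjOn f t := fun i hi j hj hij => hd.elim hi hj fun hdis =>
    (hne j hj).ne_empty (disjoint_self.1 (hij ▸ hdis))
  rw [← card_image_of_injOn hinj]
  refine card_le_matchingNumber (image_subset_iff.2 hf) ?_
  rw [coe_image]
  exact hinj.pairwiseDisjoint_image.2 hd

lemma card_le_matchingNumber_of_map {M : Finset (Finset ℕ)} (f : ℕ ↪ ℕ)
    (hM : ∀ A ∈ M, A.map f ∈ F) (hd : (M : Set (Finset ℕ)).PairwiseDisjoint id) :
    #M ≤ matchingNumber F := by
  rw [← card_image_of_injective M (map_injective f)]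
  refine card_le_matchingNumber (image_subset_iff.2 hM) ?_
  rw [coe_image]
  exact ((map_injective f).injOn.pairwiseDisjoint_image).2 fun A hA B hB hAB =>
    (disjoint_map f).2 (hd hA hB hAB)

end MatchingNumber

section Shifting

variable {α : Type*} [LinearOrder α]

/-- A family is *shifted* on `U` if replacing an element of a member by a smaller element of `U`
outside that member always yields a member. -/
def ShiftedOn (U : Finset α) (F : Finset (Finset α)) : Prop :=
  ∀ A ∈ F, ∀ x ∈ A, ∀ y ∈ U, y < x → y ∉ A → insert y (A.erase x) ∈ F

lemma ShiftedOn.mono {U V : Finset α} {F : Finset (Finset α)} (h : ShiftedOn U F) (hV : V ⊆ U) :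
    ShiftedOn V F :=
  fun A hA x hx y hy => h A hA x hx y (hV hy)

lemma card_insert_erase_of_mem {A : Finset α} {x y : α} (hx : x ∈ A) (hy : y ∉ A) :
    #(insert y (A.erase x)) = #A := by
  rw [card_insert_of_notMem (fun h => hy (mem_of_mem_erase h)), card_erase_add_one hx]

lemma compress_singleton {A : Finset α} {x y : α} (hx : x ∈ A) (hy : y ∉ A) :
    UV.compress {y} {x} A = insert y (A.erase x) := by
  rw [UV.compress_of_disjoint_of_le (by simpa using hy) (by simpa using hx)]
  ext z
  have : z = y → z ≠ x := by rintro rfl rfl; exact hy hx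
  simp only [sup_eq_union, mem_sdiff, mem_union, mem_singleton, mem_insert, mem_erase]
  tauto

lemma map_swap_eq_compress {A : Finset α} {x y : α} (hy : y ∉ A) :
    A.map (Equiv.swap x y).toEmbedding = UV.compress {y} {x} A := by
  ext z
  rw [mem_map_equiv, Equiv.symm_swap]
  by_cases hx : x ∈ A
  · rw [compress_singleton hx hy, mem_insert, mem_erase]
    rcases eq_or_ne z x with rfl | hzx
    · simp [hy, ne_of_mem_of_not_mem hx hy]
    rcases eq_or_ne z y with rfl | hzy
    · simp [hx]
    · simp [Equiv.swap_apply_of_ne_of_ne hzx hzy, hzx, hzy]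
  · rw [UV.compress, if_neg (by simp [hx])]
    rcases eq_or_ne z x with rfl | hzx
    · simp [hx, hy]
    rcases eq_or_ne z y with rfl | hzy
    · simp [hx, hy]
    · rw [Equiv.swap_apply_of_ne_of_ne hzx hzy]

lemma sum_compression_lt {β : Type*} [GeneralizedBooleanAlgebra β] [DecidableRel (α := β) Disjoint]
    [DecidableLE β] [DecidableEq β] {u v : β} {s : Finset β} {w : β → ℕ}
    (hw : ∀ a ∈ s, UV.compress u v a ∉ s → w (UV.compress u v a) < w a)
    (hs : ∃ a ∈ s, UV.compress u v a ∉ s) : ∑ a ∈ UV.compression u v s, w a < ∑ a ∈ s, w a := by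
  rw [UV.compression, sum_union UV.compress_disjoint, filter_image, sum_image UV.compress_injOn,
    ← sum_filter_add_sum_filter_not s (fun a => UV.compress u v a ∈ s)]
  obtain ⟨a, ha, has⟩ := hs
  exact Nat.add_lt_add_left (sum_lt_sum_of_nonempty ⟨a, mem_filter.2 ⟨ha, has⟩⟩ fun b hb =>
    hw b (mem_filter.1 hb).1 (mem_filter.1 hb).2) _

lemma compression_subset_powersetCard {U : Finset α} {k : ℕ} {F : Finset (Finset α)}
    (hF : F ⊆ U.powersetCard k) {x y : α} (hy : y ∈ U) :
    UV.compression {y} {x} F ⊆ U.powersetCard k := by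
  intro A hA
  rcases UV.mem_compression.1 hA with ⟨hA, -⟩ | ⟨-, B, hB, rfl⟩
  · exact hF hA
  obtain ⟨hBU, hBk⟩ := mem_powersetCard.1 (hF hB)
  refine mem_powersetCard.2 ⟨?_, (UV.card_compress (by simp) B).trans hBk⟩
  rw [UV.compress]
  split_ifs
  · exact sdiff_subset.trans (union_subset hBU (singleton_subset_iff.2 hy))
  · exact hBU

end Shifting

section ShiftingNat

/-- If a matching of the compression uses a new set `A`, then `A` is its only member containing `y`,
and exchanging `x` and `y` turns the whole matching into a matching of `F`. -/
lemma matchingNumber_compression_le (x y : ℕ) (F : Finset (Finset ℕ)) :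
    matchingNumber (UV.compression {y} {x} F) ≤ matchingNumber F := by
  refine matchingNumber_le fun M hM hd => ?_
  by_cases hMF : M ⊆ F
  · exact card_le_matchingNumber hMF hd
  obtain ⟨A, hA, hAF⟩ := not_subset.1 hMF
  have hyA : y ∈ A := singleton_subset_iff.1 (UV.le_of_mem_compression_of_notMem (hM hA) hAF)
  have hxA : x ∉ A :=
    disjoint_singleton_left.1 (UV.disjoint_of_mem_compression_of_notMem (hM hA) hAF)
  refine card_le_matchingNumber_of_map (Equiv.swap x y).toEmbedding (fun B hB => ?_) hd
  rcases eq_or_ne B A with rfl | hBA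
  · rw [Equiv.swap_comm, map_swap_eq_compress hxA,
      UV.compress_of_disjoint_of_le (by simpa using hxA) (by simpa using hyA)]
    exact UV.sup_sdiff_mem_of_mem_compression_of_notMem (hM hB) hAF
  · have hyB : y ∉ B := disjoint_right.1 (hd hB hA hBA) hyA
    rw [map_swap_eq_compress hyB]
    rcases UV.mem_compression.1 (hM hB) with h | h
    · exact h.2
    · exact absurd (singleton_subset_iff.1 (UV.le_of_mem_compression_of_notMem (hM hB) h.1)) hyB

lemma sum_insert_erase_lt {A : Finset ℕ} {x y : ℕ} (hx : x ∈ A) (hy : y ∉ A) (hyx : y < x) :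
    ∑ a ∈ insert y (A.erase x), a < ∑ a ∈ A, a := by
  rw [sum_insert (fun h => hy (mem_of_mem_erase h)), ← add_sum_erase A (fun a => a) hx]
  exact Nat.add_lt_add_right hyx _

/-- Every non-trivial compression lowers the total sum of the elements of the members, so a family
minimizing that sum is shifted. -/
lemma exists_shiftedOn {U : Finset ℕ} {k : ℕ} {F : Finset (Finset ℕ)} (hF : F ⊆ U.powersetCard k) :
    ∃ G ⊆ U.powersetCard k, matchingNumber G ≤ matchingNumber F ∧ #G = #F ∧ ShiftedOn U G := by
  let candidates :=
    {G ∈ (U.powersetCard k).powerset | matchingNumber G ≤ matchingNumber F ∧ #G = #F}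
  obtain ⟨G, hG, hmin⟩ := exists_min_image candidates (fun G => ∑ A ∈ G, ∑ a ∈ A, a)
    ⟨F, by simpa [candidates] using hF⟩
  obtain ⟨hGU, hGF, hGc⟩ :
      G ⊆ U.powersetCard k ∧ matchingNumber G ≤ matchingNumber F ∧ #G = #F := by
    simpa [candidates] using hG
  refine ⟨G, hGU, hGF, hGc, fun A hA x hx y hy hyx hyA => ?_⟩
  by_contra hnot
  have hcomp : UV.compression {y} {x} G ∈ candidates := by
    simp only [candidates, mem_filter, mem_powerset, UV.card_compression]
    exact ⟨compression_subset_powersetCard hGU hy,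
      (matchingNumber_compression_le x y G).trans hGF, hGc⟩
  refine (hmin _ hcomp).not_gt (sum_compression_lt (fun B hB hBG => ?_)
    ⟨A, hA, by rwa [compress_singleton hx hyA]⟩)
  by_cases h : x ∈ B ∧ y ∉ B
  · rw [compress_singleton h.1 h.2]
    exact sum_insert_erase_lt h.1 h.2 hyx
  · rw [UV.compress, if_neg (by simpa [and_comm] using h)] at hBG
    exact absurd hB hBG

end ShiftingNat

section Splitting

variable {α : Type*} [DecidableEq α] {U : Finset α} {z : α} {F : Finset (Finset α)}

lemma nonMemberSubfamily_subset_powersetCard {a : ℕ} (hF : F ⊆ (insert z U).powersetCard a) :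
    F.nonMemberSubfamily z ⊆ U.powersetCard a := by
  intro A hA
  obtain ⟨hAF, hzA⟩ := mem_nonMemberSubfamily.1 hA
  obtain ⟨hAU, hAa⟩ := mem_powersetCard.1 (hF hAF)
  exact mem_powersetCard.2 ⟨(subset_insert_iff_of_notMem hzA).1 hAU, hAa⟩

lemma memberSubfamily_subset_powersetCard {a : ℕ} (hF : F ⊆ (insert z U).powersetCard (a + 1)) :
    F.memberSubfamily z ⊆ U.powersetCard a := by
  intro A hA
  obtain ⟨hAF, hzA⟩ := mem_memberSubfamily.1 hA
  obtain ⟨hAU, hAa⟩ := mem_powersetCard.1 (hF hAF)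
  rw [card_insert_of_notMem hzA] at hAa
  exact mem_powersetCard.2 ⟨(insert_subset_insert_iff hzA).1 hAU, Nat.succ_injective hAa⟩

lemma shadow_nonMemberSubfamily_subset :
    ∂ (F.nonMemberSubfamily z) ⊆ (∂ F).nonMemberSubfamily z := by
  intro B hB
  obtain ⟨A, hA, x, hx, rfl⟩ := mem_shadow_iff.1 hB
  obtain ⟨hAF, hzA⟩ := mem_nonMemberSubfamily.1 hA
  exact mem_nonMemberSubfamily.2 ⟨erase_mem_shadow hAF hx, fun h => hzA (mem_of_mem_erase h)⟩

lemma shadow_memberSubfamily_subset :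
    ∂ (F.memberSubfamily z) ⊆ (∂ F).memberSubfamily z := by
  intro B hB
  obtain ⟨A, hA, x, hx, rfl⟩ := mem_shadow_iff.1 hB
  obtain ⟨hAF, hzA⟩ := mem_memberSubfamily.1 hA
  refine mem_memberSubfamily.2 ⟨?_, fun h => hzA (mem_of_mem_erase h)⟩
  rw [← erase_insert_of_ne (ne_of_mem_of_not_mem hx hzA).symm]
  exact erase_mem_shadow hAF (mem_insert_of_mem hx)

lemma sum_memberSubfamily_add_sum_nonMemberSubfamily (f : Finset α → ℕ) :
    ∑ A ∈ F.memberSubfamily z, f (insert z A) + ∑ A ∈ F.nonMemberSubfamily z, f A =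
      ∑ A ∈ F, f A := by
  have hinj : Set.InjOn (insert z) (F.memberSubfamily z : Set (Finset α)) := by
    intro A hA B hB hAB
    rw [← erase_insert (mem_memberSubfamily.1 hA).2, hAB, erase_insert (mem_memberSubfamily.1 hB).2]
  rw [← sum_image hinj, image_insert_memberSubfamily, nonMemberSubfamily,
    sum_filter_add_sum_filter_not]

lemma card_mul_le_card_shadow_mul_of_subset {b : ℕ} (hF : F ⊆ U.powersetCard (b + 1)) :
    #F * (b + 1) ≤ #(∂ F) * (#U - b) := by
  refine card_mul_le_card_mul (fun A B => B ⊆ A) (fun A hA => ?_) (fun B hB => ?_)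
  · rw [← (mem_powersetCard.1 (hF hA)).2, ← card_image_of_injOn A.erase_injOn]
    refine card_le_card (image_subset_iff.2 fun x hx => ?_)
    exact (mem_bipartiteAbove _).2 ⟨erase_mem_shadow hA hx, erase_subset x A⟩
  · obtain ⟨A₀, hA₀, x, hx, rfl⟩ := mem_shadow_iff.1 hB
    obtain ⟨hA₀U, hA₀b⟩ := mem_powersetCard.1 (hF hA₀)
    have hBb : #(A₀.erase x) = b := by rw [card_erase_of_mem hx, hA₀b, Nat.add_sub_cancel]
    rw [← hBb, ← card_sdiff_of_subset ((erase_subset x A₀).trans hA₀U)]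
    refine (card_le_card fun A hA => ?_).trans
      (card_image_le (f := fun y => insert y (A₀.erase x)) (s := U \ A₀.erase x))
    obtain ⟨hAF, hBA⟩ := (mem_bipartiteBelow _).1 hA
    obtain ⟨hAU, hAb⟩ := mem_powersetCard.1 (hF hAF)
    obtain ⟨y, hy, rfl⟩ := exists_eq_insert_iff.2 ⟨hBA, by rw [hBb, hAb]⟩
    exact mem_image_of_mem _ (mem_sdiff.2 ⟨hAU (mem_insert_self y _), hy⟩)

end Splitting

section ShiftedSplitting

variable {α : Type*} [LinearOrder α] {U : Finset α} {z : α} {F : Finset (Finset α)}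

lemma ShiftedOn.nonMemberSubfamily (h : ShiftedOn U F) (hz : z ∉ U) :
    ShiftedOn U (F.nonMemberSubfamily z) := by
  intro A hA x hx y hy hyx hyA
  obtain ⟨hAF, hzA⟩ := mem_nonMemberSubfamily.1 hA
  have hzy : z ≠ y := fun h => hz (h ▸ hy)
  exact mem_nonMemberSubfamily.2 ⟨h A hAF x hx y hy hyx hyA, by simp [hzy, hzA]⟩

lemma ShiftedOn.memberSubfamily (h : ShiftedOn U F) (hz : z ∉ U) :
    ShiftedOn U (F.memberSubfamily z) := by
  intro A hA x hx y hy hyx hyA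
  obtain ⟨hAF, hzA⟩ := mem_memberSubfamily.1 hA
  have hzy : y ≠ z := fun h => hz (h ▸ hy)
  have hxz : z ≠ x := (ne_of_mem_of_not_mem hx hzA).symm
  refine mem_memberSubfamily.2 ⟨?_, by simp [hzy.symm, hzA]⟩
  rw [insert_comm, ← erase_insert_of_ne hxz]
  exact h _ hAF x (mem_insert_of_mem hx) y hy hyx (by simp [hzy, hyA])

lemma ShiftedOn.shadow_nonMemberSubfamily_subset_memberSubfamily
    (h : ShiftedOn (insert z U) F) (hz : ∀ x ∈ U, z < x) (hF : ∀ A ∈ F, A ⊆ insert z U) :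
    ∂ (F.nonMemberSubfamily z) ⊆ F.memberSubfamily z := by
  intro B hB
  obtain ⟨A, hA, x, hx, rfl⟩ := mem_shadow_iff.1 hB
  obtain ⟨hAF, hzA⟩ := mem_nonMemberSubfamily.1 hA
  have hxU : x ∈ U := (mem_insert.1 (hF A hAF hx)).resolve_left (ne_of_mem_of_not_mem hx hzA)
  exact mem_memberSubfamily.2 ⟨h A hAF x hx z (mem_insert_self z U) (hz x hxU) hzA,
    fun h => hzA (mem_of_mem_erase h)⟩

end ShiftedSplitting

section DisjointPairs

variable {α : Type*} [DecidableEq α]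

/-- The pairs of disjoint sets, the first taken from `F` and the second from `G`. -/
def disjointPairs (F G : Finset (Finset α)) : Finset (Finset α × Finset α) :=
  {p ∈ F ×ˢ G | Disjoint p.1 p.2}

lemma card_disjointPairs_le (F G : Finset (Finset α)) : #(disjointPairs F G) ≤ #F * #G := by
  rw [← card_product]
  exact card_filter_le _ _

lemma card_disjointPairs_eq_sum (F G : Finset (Finset α)) :
    #(disjointPairs F G) = ∑ A ∈ F, #{B ∈ G | Disjoint A B} := by
  simp only [disjointPairs, card_filter, sum_product]

lemma disjointPairs_eq_empty_of_card_lt {U : Finset α} {a b : ℕ} {F G : Finset (Finset α)}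
    (hF : F ⊆ U.powersetCard a) (hG : G ⊆ U.powersetCard b) (h : #U < a + b) :
    disjointPairs F G = ∅ := by
  refine filter_eq_empty_iff.2 fun p hp hd => h.not_ge ?_
  obtain ⟨hA, hB⟩ := mem_product.1 hp
  obtain ⟨hAU, rfl⟩ := mem_powersetCard.1 (hF hA)
  obtain ⟨hBU, rfl⟩ := mem_powersetCard.1 (hG hB)
  rw [← card_union_of_disjoint hd]
  exact card_le_card (union_subset hAU hBU)

lemma card_filter_disjoint_insert (G : Finset (Finset α)) (z : α) (A : Finset α) :
    #{B ∈ G | Disjoint (insert z A) B} = #{B ∈ G.nonMemberSubfamily z | Disjoint A B} := by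
  congr 1
  ext B
  simp only [mem_filter, mem_nonMemberSubfamily, disjoint_insert_left, and_assoc]

lemma card_filter_disjoint_of_notMem (G : Finset (Finset α)) {z : α} {A : Finset α} (hz : z ∉ A) :
    #{B ∈ G | Disjoint A B} =
      #{B ∈ G.memberSubfamily z | Disjoint A B} +
        #{B ∈ G.nonMemberSubfamily z | Disjoint A B} := by
  rw [← card_memberSubfamily_add_card_nonMemberSubfamily z {B ∈ G | Disjoint A B}]
  congr 2
  · ext B
    simp only [mem_filter, mem_memberSubfamily, disjoint_insert_right]
    tauto
  · ext B
    simp only [mem_filter, mem_nonMemberSubfamily]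
    tauto

lemma card_disjointPairs_eq_add (F G : Finset (Finset α)) (z : α) :
    #(disjointPairs F G) =
      #(disjointPairs (F.memberSubfamily z) (G.nonMemberSubfamily z)) +
      #(disjointPairs (F.nonMemberSubfamily z) (G.memberSubfamily z)) +
      #(disjointPairs (F.nonMemberSubfamily z) (G.nonMemberSubfamily z)) := by
  simp only [card_disjointPairs_eq_sum]
  rw [← sum_memberSubfamily_add_sum_nonMemberSubfamily (F := F) (z := z), add_assoc,
    ← sum_add_distrib]
  congr 1
  · exact sum_congr rfl fun A _ => card_filter_disjoint_insert G z A
  · exact sum_congr rfl fun A hA =>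
      card_filter_disjoint_of_notMem G (mem_nonMemberSubfamily.1 hA).2

end DisjointPairs

section NegativeCorrelation

/-- The inequality comes from `0 ≤ (f₁ * M - f₀ * a) * (g₁ * L - g₀ * b)`: the two families have
positively correlated densities across the split. -/
lemma add_mul_le_mul_add_mul_add {f₀ f₁ g₀ g₁ a b M L : ℝ} (hab : a + M = b + L)
    (hf : f₀ * a ≤ f₁ * M) (hg : g₀ * b ≤ g₁ * L) :
    (b + L) * (M * (f₁ * g₀) + L * (f₀ * g₁) + (M - b) * (f₀ * g₀)) ≤
      M * L * ((f₁ + f₀) * (g₁ + g₀)) := by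
  have hprod := mul_nonneg (sub_nonneg.2 hf) (sub_nonneg.2 hg)
  obtain rfl : a = b + L - M := by linarith
  linarith

/-- `c` and `c'` stand for consecutive binomial coefficients `n.choose (b + 1)` and `n.choose b`,
and `D`, `X`, `Y` for the terms of Pascal's rule `D = X + Y`. -/
lemma sum_mul_le_of_split {f₀ f₁ g₀ g₁ P₁₀ P₀₁ P₀₀ c c' D X Y a b M L : ℝ} (hM : 0 < M)
    (hL : 0 < L) (hb : 0 < b) (hD : 0 ≤ D) (hab : a + M = b + L) (hc : c' * L = c * b)
    (hX : X * M = D * b) (hY : Y * M = D * (M - b)) (hf : f₀ * a ≤ f₁ * M) (hg : g₀ * b ≤ g₁ * L)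
    (h₁₀ : P₁₀ * c ≤ f₁ * g₀ * D) (h₀₁ : P₀₁ * c' ≤ f₀ * g₁ * X) (h₀₀ : P₀₀ * c ≤ f₀ * g₀ * Y) :
    (P₁₀ + P₀₁ + P₀₀) * (c' + c) ≤ (f₁ + f₀) * (g₁ + g₀) * D := by
  have b₁₀ : M * L * (P₁₀ * (c' + c)) ≤ (b + L) * (M * (f₁ * g₀)) * D := calc
    _ = M * (b + L) * (P₁₀ * c) := by linear_combination M * P₁₀ * hc
    _ ≤ M * (b + L) * (f₁ * g₀ * D) := by gcongr
    _ = _ := by ring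
  have b₀₁ : M * L * (P₀₁ * (c' + c)) ≤ (b + L) * (L * (f₀ * g₁)) * D := by
    refine le_of_mul_le_mul_left ?_ hb
    calc b * (M * L * (P₀₁ * (c' + c)))
      _ = M * L * (b + L) * (P₀₁ * c') := by linear_combination -M * L * P₀₁ * hc
      _ ≤ M * L * (b + L) * (f₀ * g₁ * X) := by gcongr
      _ = _ := by linear_combination L * (b + L) * f₀ * g₁ * hX
  have b₀₀ : M * L * (P₀₀ * (c' + c)) ≤ (b + L) * ((M - b) * (f₀ * g₀)) * D := calc
    _ = M * (b + L) * (P₀₀ * c) := by linear_combination M * P₀₀ * hc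
    _ ≤ M * (b + L) * (f₀ * g₀ * Y) := by gcongr
    _ = _ := by linear_combination (b + L) * f₀ * g₀ * hY
  have hcheb := mul_le_mul_of_nonneg_right (add_mul_le_mul_add_mul_add hab hf hg) hD
  refine le_of_mul_le_mul_left ?_ (mul_pos hM hL)
  linarith

lemma sum_mul_choose_le_of_split {n a b f₀ f₁ g₀ g₁ P₁₀ P₀₁ P₀₀ : ℕ} (hn : a + b + 1 ≤ n)
    (hf : f₀ * (a + 1) ≤ f₁ * (n - a)) (hg : g₀ * (b + 1) ≤ g₁ * (n - b))
    (h₁₀ : P₁₀ * n.choose (b + 1) ≤ f₁ * g₀ * (n - a).choose (b + 1))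
    (h₀₁ : P₀₁ * n.choose b ≤ f₀ * g₁ * (n - (a + 1)).choose b)
    (h₀₀ : P₀₀ * n.choose (b + 1) ≤ f₀ * g₀ * (n - (a + 1)).choose (b + 1)) :
    (P₁₀ + P₀₁ + P₀₀) * (n + 1).choose (b + 1) ≤
      (f₁ + f₀) * (g₁ + g₀) * (n - a).choose (b + 1) := by
  obtain ⟨m, hm⟩ : ∃ m, n - a = m + 1 := ⟨n - a - 1, by omega⟩
  obtain ⟨L, hL⟩ : ∃ L, n - b = L := ⟨_, rfl⟩
  have hna : n - (a + 1) = m := by omega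
  rw [hm] at hf h₁₀ ⊢
  rw [hL] at hg
  rw [hna] at h₀₁ h₀₀
  rw [Nat.choose_succ_succ]
  have hX : (m.choose b : ℝ) * (m + 1) = (m + 1).choose (b + 1) * (b + 1) := by
    have := Nat.add_one_mul_choose_eq m b
    exact_mod_cast (mul_comm _ _).trans this
  have hpascal : ((m + 1).choose (b + 1) : ℝ) = m.choose b + m.choose (b + 1) := by
    exact_mod_cast Nat.choose_succ_succ m b
  have hY : (m.choose (b + 1) : ℝ) * (m + 1) = (m + 1).choose (b + 1) * (m + 1 - (b + 1)) := by
    linear_combination -hX - (m + 1 : ℝ) * hpascal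
  have hc : (n.choose b : ℝ) * L = n.choose (b + 1) * (b + 1) := by
    exact_mod_cast hL ▸ (Nat.choose_succ_right_eq n b).symm
  have hab : ((a : ℝ) + 1) + (m + 1) = (b + 1) + L := by
    exact_mod_cast (by omega : a + 1 + (m + 1) = b + 1 + L)
  have hL0 : (0 : ℝ) < L := by exact_mod_cast (by omega : 0 < L)
  exact_mod_cast sum_mul_le_of_split (f₀ := f₀) (f₁ := f₁) (g₀ := g₀) (g₁ := g₁) (P₁₀ := P₁₀)
    (P₀₁ := P₀₁) (P₀₀ := P₀₀) (by positivity) hL0 (by positivity) (by positivity) hab hc hX hY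
    (by exact_mod_cast hf) (by exact_mod_cast hg) (by exact_mod_cast h₁₀) (by exact_mod_cast h₀₁)
    (by exact_mod_cast h₀₀)

variable {α : Type*} [LinearOrder α]

/-- Shifted families are negatively correlated: a uniformly random disjoint pair lies in `F × G`
with at most the probability that an independent pair does. -/
theorem ShiftedOn.card_disjointPairs_mul_choose_le {U : Finset α} {a b : ℕ}
    {F G : Finset (Finset α)} (hF : F ⊆ U.powersetCard a) (hG : G ⊆ U.powersetCard b)
    (sF : ShiftedOn U F) (sG : ShiftedOn U G) :
    #(disjointPairs F G) * (#U).choose b ≤ #F * #G * (#U - a).choose b := by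
  induction U using Finset.induction_on_min generalizing a b F G with
  | empty =>
    rcases b.eq_zero_or_pos with rfl | hb
    · simpa using card_disjointPairs_le F G
    · simp [Nat.choose_eq_zero_of_lt hb]
  | insert z U hz ih =>
    have hzU : z ∉ U := fun h => lt_irrefl _ (hz z h)
    rcases a with _ | a
    · exact Nat.mul_le_mul_right _ (card_disjointPairs_le F G)
    rcases b with _ | b
    · simpa using card_disjointPairs_le F G
    by_cases hsmall : #(insert z U) < (a + 1) + (b + 1)
    · simp [disjointPairs_eq_empty_of_card_lt hF hG hsmall]
    have hcard : #(insert z U) = #U + 1 := card_insert_of_notMem hzU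
    have hF₀ := nonMemberSubfamily_subset_powersetCard hF
    have hF₁ := memberSubfamily_subset_powersetCard hF
    have hG₀ := nonMemberSubfamily_subset_powersetCard hG
    have hG₁ := memberSubfamily_subset_powersetCard hG
    have sF' := sF.mono (subset_insert z U)
    have sG' := sG.mono (subset_insert z U)
    have lymF := (card_mul_le_card_shadow_mul_of_subset hF₀).trans <| Nat.mul_le_mul_right _ <|
      card_le_card <| sF.shadow_nonMemberSubfamily_subset_memberSubfamily hz
        fun A hA => (mem_powersetCard.1 (hF hA)).1
    have lymG := (card_mul_le_card_shadow_mul_of_subset hG₀).trans <| Nat.mul_le_mul_right _ <|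
      card_le_card <| sG.shadow_nonMemberSubfamily_subset_memberSubfamily hz
        fun A hA => (mem_powersetCard.1 (hG hA)).1
    rw [card_disjointPairs_eq_add F G z, ← card_memberSubfamily_add_card_nonMemberSubfamily z F,
      ← card_memberSubfamily_add_card_nonMemberSubfamily z G, hcard, Nat.add_sub_add_right]
    exact sum_mul_choose_le_of_split (by omega) lymF lymG
      (ih hF₁ hG₀ (sF'.memberSubfamily hzU) (sG'.nonMemberSubfamily hzU))
      (ih hF₀ hG₁ (sF'.nonMemberSubfamily hzU) (sG'.memberSubfamily hzU))
      (ih hF₀ hG₀ (sF'.nonMemberSubfamily hzU) (sG'.nonMemberSubfamily hzU))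

end NegativeCorrelation

section ShadowBound

variable {U : Finset ℕ} {B : Finset (Finset ℕ)}

lemma card_le_matchingNumber_mul_card_shadow_of_singletons (hB : B ⊆ U.powersetCard 1) :
    #B ≤ matchingNumber B * #(∂ B) := by
  rcases B.eq_empty_or_nonempty with rfl | ⟨A, hA⟩
  · simp
  have hsingle : ∀ A ∈ B, ∃ x, A = {x} := fun A hA =>
    card_eq_one.1 (mem_powersetCard.1 (hB hA)).2
  have hmatching : #B ≤ matchingNumber B := by
    refine card_le_matchingNumber subset_rfl fun A hA A' hA' hne => ?_
    obtain ⟨x, rfl⟩ := hsingle A hA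
    obtain ⟨y, rfl⟩ := hsingle A' hA'
    exact disjoint_singleton.2 fun h => hne (h ▸ rfl)
  obtain ⟨x, rfl⟩ := hsingle A hA
  have hshadow : 0 < #(∂ B) := card_pos.2 ⟨_, erase_mem_shadow hA (mem_singleton_self x)⟩
  exact hmatching.trans (Nat.le_mul_of_pos_right _ hshadow)

/-- The members of a matching of the last link extend to members of `B` containing `z`; there is
room to shift these copies of `z` to distinct elements not covered by the matching. -/
lemma ShiftedOn.matchingNumber_memberSubfamily_le {z k : ℕ} (hz : ∀ x ∈ U, x < z)
    (hB : B ⊆ (insert z U).powersetCard (k + 1)) (hS : ShiftedOn (insert z U) B)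
    (hU : (k + 1) * (matchingNumber B + 1) ≤ #U + 1) :
    matchingNumber (B.memberSubfamily z) ≤ matchingNumber B := by
  have hzU : z ∉ U := fun h => lt_irrefl z (hz z h)
  refine matchingNumber_le fun M' hM' hd' => ?_
  by_contra! hlt
  obtain ⟨M, hMM', hMcard⟩ := exists_subset_card_eq (Nat.succ_le_of_lt hlt)
  have hM := hMM'.trans hM'
  have hcovered : #(M.biUnion id) ≤ #M * k := card_biUnion_le_card_mul _ _ _ fun A hA =>
    (mem_powersetCard.1 (memberSubfamily_subset_powersetCard hB (hM hA))).2.le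
  have hfree : #M ≤ #(insert z U \ M.biUnion id) := by
    have hground := Nat.sub_le_iff_le_add.1 (le_card_sdiff (M.biUnion id) (insert z U))
    rw [card_insert_of_notMem hzU] at hground
    rw [hMcard, Nat.succ_eq_add_one] at hcovered ⊢
    linarith
  obtain ⟨g, hgV, hginj⟩ := M.finite_toSet.exists_injOn_of_encard_le
    (t := ((insert z U \ M.biUnion id : Finset ℕ) : Set ℕ))
    (by rwa [Set.encard_coe_eq_coe_finsetCard, Set.encard_coe_eq_coe_finsetCard, Nat.cast_le])
  have hg : ∀ A ∈ M, g A ∈ insert z U ∧ ∀ A' ∈ M, g A ∉ A' := fun A hA => by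
    simpa using mem_sdiff.1 (mem_coe.1 (hgV hA))
  have hextend : ∀ A ∈ M, insert (g A) A ∈ B := fun A hA => by
    obtain ⟨hAB, hzA⟩ := mem_memberSubfamily.1 (hM hA)
    rcases mem_insert.1 (hg A hA).1 with hgz | hgU
    · rwa [hgz]
    have h := hS _ hAB z (mem_insert_self z A) (g A) (hg A hA).1 (hz _ hgU)
      (by simp [(hz _ hgU).ne, (hg A hA).2 A hA])
    rwa [erase_insert hzA] at h
  have hcontra : #M ≤ matchingNumber B := by
    refine card_le_matchingNumber_of_pairwiseDisjoint hextend (fun A _ => insert_nonempty _ _)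
      fun A hA A' hA' hne => ?_
    rw [Function.onFun, disjoint_insert_left, disjoint_insert_right, mem_insert, not_or]
    exact ⟨⟨fun h => hne (hginj hA hA' h), (hg A hA).2 A' hA'⟩, (hg A' hA').2 A hA,
      hd' (hMM' hA) (hMM' hA') hne⟩
  omega

theorem ShiftedOn.card_le_matchingNumber_mul_card_shadow {k : ℕ}
    (hB : B ⊆ U.powersetCard (k + 1)) (hS : ShiftedOn U B) :
    #B ≤ matchingNumber B * #(∂ B) := by
  induction U using Finset.induction_on_max generalizing k B with
  | empty =>
    rw [powersetCard_eq_empty.2 (by simp), subset_empty] at hB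
    simp [hB]
  | insert z U hz ih =>
    rcases k with _ | k
    · exact card_le_matchingNumber_mul_card_shadow_of_singletons hB
    have hzU : z ∉ U := fun h => lt_irrefl z (hz z h)
    have hS' := hS.mono (subset_insert z U)
    by_cases hbig : (k + 1 + 1) * (matchingNumber B + 1) ≤ #U + 1
    · have hwithout := (ih (nonMemberSubfamily_subset_powersetCard hB)
        (hS'.nonMemberSubfamily hzU)).trans <| Nat.mul_le_mul
          (matchingNumber_mono (filter_subset _ _)) (card_le_card shadow_nonMemberSubfamily_subset)
      have hwith := (ih (memberSubfamily_subset_powersetCard hB)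
        (hS'.memberSubfamily hzU)).trans <| Nat.mul_le_mul
          (hS.matchingNumber_memberSubfamily_le hz hB hbig)
          (card_le_card shadow_memberSubfamily_subset)
      rw [← card_memberSubfamily_add_card_nonMemberSubfamily z B,
        ← card_memberSubfamily_add_card_nonMemberSubfamily z (∂ B), mul_add]
      exact add_le_add hwith hwithout
    · have hlym := card_mul_le_card_shadow_mul_of_subset hB
      rw [card_insert_of_notMem hzU] at hlym
      have hdegree : #U + 1 - (k + 1) ≤ matchingNumber B * (k + 1 + 1) := by
        rw [not_le, mul_add_one, mul_comm] at hbig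
        omega
      refine Nat.le_of_mul_le_mul_right (c := k + 1 + 1) ?_ (by omega)
      calc #B * (k + 1 + 1) ≤ #(∂ B) * (#U + 1 - (k + 1)) := hlym
        _ ≤ #(∂ B) * (matchingNumber B * (k + 1 + 1)) := Nat.mul_le_mul_left _ hdegree
        _ = matchingNumber B * #(∂ B) * (k + 1 + 1) := by ring

end ShadowBound

section Domination

variable {α : Type*} [LinearOrder α] {K K' : Finset α} {x y : α}

lemma lt_of_card_filter_lt_le (hdom : ∀ m, #{a ∈ K | a < m} ≤ #{a ∈ K' | a < m})
    (hx : x ∈ K \ K') (hy : y ∈ K' \ K) (hymin : ∀ a ∈ K' \ K, y ≤ a) : y < x := by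
  rw [mem_sdiff] at hx hy
  have hne : x ≠ y := fun h => hy.2 (h ▸ hx.1)
  refine lt_of_le_of_ne (not_lt.1 fun hxy => ?_) hne.symm
  refine (hdom y).not_gt (card_lt_card ((ssubset_iff_of_subset fun a ha => ?_).2
    ⟨x, by simp [hx.1, hxy], by simp [hx.2]⟩))
  rw [mem_filter] at ha ⊢
  exact ⟨by_contra fun haK => (hymin a (mem_sdiff.2 ⟨ha.1, haK⟩)).not_gt ha.2, ha.2⟩

lemma card_filter_lt_insert_erase_le (hdom : ∀ m, #{a ∈ K | a < m} ≤ #{a ∈ K' | a < m})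
    (hx : x ∈ K) (hxmin : ∀ a ∈ K \ K', x ≤ a) (hy : y ∈ K') (hyK : y ∉ K) (hyx : y < x) (m : α) :
    #{a ∈ insert y (K.erase x) | a < m} ≤ #{a ∈ K' | a < m} := by
  rcases le_or_gt m x with hmx | hxm
  · refine card_le_card fun a ha => ?_
    obtain ⟨ha, ham⟩ := mem_filter.1 ha
    refine mem_filter.2 ⟨?_, ham⟩
    rcases mem_insert.1 ha with rfl | ha
    · exact hy
    · exact by_contra fun haK => (hxmin a (mem_sdiff.2 ⟨mem_of_mem_erase ha, haK⟩)).not_gt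
        (ham.trans_le hmx)
  · refine le_trans (le_of_eq ?_) (hdom m)
    rw [filter_insert, if_pos (hyx.trans hxm), filter_erase,
      card_insert_erase_of_mem (mem_filter.2 ⟨hx, hxm⟩) fun h => hyK (mem_filter.1 h).1]

theorem ShiftedOn.mem_of_card_filter_lt_le {U : Finset α} {F : Finset (Finset α)}
    (hS : ShiftedOn U F) (hK : K ∈ F) (hK' : K' ⊆ U) (hc : #K = #K')
    (hdom : ∀ m, #{a ∈ K | a < m} ≤ #{a ∈ K' | a < m}) : K' ∈ F := by
  induction hd : #(K \ K') generalizing K with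
  | zero =>
    rw [card_eq_zero, sdiff_eq_empty_iff_subset] at hd
    exact eq_of_subset_of_card_le hd hc.ge ▸ hK
  | succ d ih =>
    have hne : (K \ K').Nonempty := card_pos.1 (by omega)
    have hne' : (K' \ K).Nonempty := card_pos.1 (by rw [card_sdiff_comm hc.symm]; omega)
    obtain ⟨x, hx, hxmin⟩ := exists_min_image _ id hne
    obtain ⟨y, hy, hymin⟩ := exists_min_image _ id hne'
    have hyx : y < x := lt_of_card_filter_lt_le hdom hx hy hymin
    obtain ⟨⟨hxK, -⟩, hyK', hyK⟩ := And.intro (mem_sdiff.1 hx) (mem_sdiff.1 hy)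
    refine ih (hS K hK x hxK y (hK' hyK') hyx hyK)
      ((card_insert_erase_of_mem hxK hyK).trans hc)
      (card_filter_lt_insert_erase_le hdom hxK hxmin hyK' hyK hyx) ?_
    rw [insert_sdiff_of_mem _ hyK', erase_sdiff_comm, card_erase_of_mem hx, hd,
      Nat.add_sub_cancel]

end Domination

section BelowLine

lemma le_card_filter_lt_progression {c d i k m : ℕ} (hi : i < d) (hc : c ≤ k) (hm : d * c ≤ m) :
    c ≤ #{x ∈ (range k).image fun j => j * d + i | x < m} := by
  have hinj : Function.Injective fun j => j * d + i := fun a b h =>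
    Nat.eq_of_mul_eq_mul_right (by omega) (Nat.add_right_cancel h)
  calc c = #((range c).image fun j => j * d + i) := by
        rw [card_image_of_injective _ hinj, card_range]
    _ ≤ _ := card_le_card fun x hx => by
        obtain ⟨j, hj, rfl⟩ := mem_image.1 hx
        rw [mem_range] at hj
        refine mem_filter.2 ⟨mem_image_of_mem _ (mem_range.2 (hj.trans_le hc)), ?_⟩
        calc j * d + i < (j + 1) * d := by rw [add_one_mul]; omega
          _ ≤ c * d := Nat.mul_le_mul_right d hj
          _ ≤ m := by rwa [mul_comm]

lemma pairwiseDisjoint_progression (d k : ℕ) :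
    (range d : Set ℕ).PairwiseDisjoint fun i => (range k).image fun j => j * d + i := by
  intro i hi i' hi' hne
  rw [Function.onFun, disjoint_left]
  intro x hx hx'
  obtain ⟨a, -, rfl⟩ := mem_image.1 hx
  obtain ⟨b, -, hb⟩ := mem_image.1 hx'
  apply hne
  rw [← Nat.mod_eq_of_lt (mem_range.1 hi), ← Nat.mod_eq_of_lt (mem_range.1 hi'),
    ← Nat.mul_add_mod' a d i, ← Nat.mul_add_mod' b d i', hb]

/-- The lattice path of `K`, started at `o`, stays weakly below the line of slope `1 / (s + 1)`. -/
def BelowLine (s o : ℕ) (K : Finset ℕ) : Prop :=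
  ∀ m, (s + 1) * #{x ∈ K | x < o + m} ≤ m

/-- A set below the line is dominated by each residue class modulo `s + 1`. -/
theorem ShiftedOn.not_belowLine {s n k : ℕ} {F : Finset (Finset ℕ)}
    (hF : F ⊆ (range n).powersetCard k) (hk : 0 < k) (hS : ShiftedOn (range n) F)
    (hs : matchingNumber F ≤ s) {K : Finset ℕ} (hK : K ∈ F) : ¬ BelowLine s 0 K := by
  intro hW
  obtain ⟨hKn, hKk⟩ := mem_powersetCard.1 (hF hK)
  simp only [BelowLine, zero_add] at hW
  have hkn : (s + 1) * k ≤ n := by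
    simpa only [filter_true_of_mem fun _ hx => mem_range.1 (hKn hx), hKk] using hW n
  have hcard : ∀ i < s + 1, #((range k).image fun j => j * (s + 1) + i) = k := fun i _ => by
    rw [card_image_of_injective, card_range]
    exact fun a b h => Nat.eq_of_mul_eq_mul_right s.succ_pos (Nat.add_right_cancel h)
  have hmem : ∀ i ∈ range (s + 1), (range k).image (fun j => j * (s + 1) + i) ∈ F := fun i hi => by
    rw [mem_range] at hi
    refine hS.mem_of_card_filter_lt_le hK (fun x hx => ?_) (by rw [hcard i hi, hKk]) fun m =>
      le_card_filter_lt_progression hi ((card_filter_le _ _).trans hKk.le) (hW m)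
    obtain ⟨j, hj, rfl⟩ := mem_image.1 hx
    have hjk : (j + 1) * (s + 1) ≤ k * (s + 1) := Nat.mul_le_mul_right _ (mem_range.1 hj)
    rw [mem_range]
    linarith
  have hcontra := card_le_matchingNumber_of_pairwiseDisjoint hmem
    (fun i hi => card_pos.1 (by rw [hcard i (mem_range.1 hi)]; exact hk))
    (pairwiseDisjoint_progression (s + 1) k)
  rw [card_range] at hcontra
  omega

open Classical in
/-- The `k`-subsets of `[o, o + m)` below the line of slope `1 / (s + 1)` started at `o`. -/
noncomputable def belowLineSets (s o m k : ℕ) : Finset (Finset ℕ) :=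
  {K ∈ (Ico o (o + m)).powersetCard k | BelowLine s o K}

variable {s o m k : ℕ} {K : Finset ℕ}

lemma mem_belowLineSets :
    K ∈ belowLineSets s o m k ↔ (K ⊆ Ico o (o + m) ∧ #K = k) ∧ BelowLine s o K := by
  simp only [belowLineSets, mem_filter, mem_powersetCard]

lemma belowLineSets_zero_right (s o m : ℕ) : belowLineSets s o m 0 = {∅} := by
  ext K
  rw [mem_belowLineSets, card_eq_zero, mem_singleton]
  exact ⟨fun h => h.1.2, by rintro rfl; simp [BelowLine]⟩

lemma belowLineSets_eq_empty (h : m < (s + 1) * k) : belowLineSets s o m k = ∅ := by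
  refine eq_empty_of_forall_notMem fun K hK => ?_
  obtain ⟨⟨hKI, rfl⟩, hW⟩ := mem_belowLineSets.1 hK
  have hWm := hW m
  rw [filter_true_of_mem fun x hx => (mem_Ico.1 (hKI hx)).2] at hWm
  omega

lemma BelowLine.mono {L : Finset ℕ} (hL : BelowLine s o L) (hKL : K ⊆ L) : BelowLine s o K :=
  fun m => (Nat.mul_le_mul_left _ (card_le_card (filter_subset_filter _ hKL))).trans (hL m)

lemma belowLine_insert (hK : BelowLine s o K) (hcard : (s + 1) * (#K + 1) ≤ m + 1) :
    BelowLine s o (insert (o + m) K) := by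
  intro j
  rcases le_or_gt j m with hj | hj
  · rw [filter_insert, if_neg (by omega)]
    exact hK j
  · calc (s + 1) * #{x ∈ insert (o + m) K | x < o + j}
        ≤ (s + 1) * (#K + 1) :=
          Nat.mul_le_mul_left _ ((card_filter_le _ _).trans (card_insert_le _ _))
      _ ≤ j := hcard.trans hj

lemma card_belowLineSets_succ_succ (h : (s + 1) * (k + 1) ≤ m + 1) :
    #(belowLineSets s o (m + 1) (k + 1)) =
      #(belowLineSets s o m k) + #(belowLineSets s o m (k + 1)) := by
  have hIco : Ico o (o + (m + 1)) = insert (o + m) (Ico o (o + m)) := by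
    rw [← add_assoc, insert_Ico_right_eq_Ico_add_one (Nat.le_add_right o m)]
  have hnot : ∀ {K}, K ⊆ Ico o (o + m) → o + m ∉ K := fun hK hm => by simpa using hK hm
  rw [← card_memberSubfamily_add_card_nonMemberSubfamily (o + m)]
  congr 2
  · ext K
    rw [mem_memberSubfamily, mem_belowLineSets, mem_belowLineSets, hIco]
    constructor
    · rintro ⟨⟨⟨hKI, hKc⟩, hW⟩, hK⟩
      rw [card_insert_of_notMem hK, Nat.add_right_cancel_iff] at hKc
      exact ⟨⟨(insert_subset_insert_iff hK).1 hKI, hKc⟩, hW.mono (subset_insert _ _)⟩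
    · rintro ⟨⟨hKI, rfl⟩, hW⟩
      exact ⟨⟨⟨insert_subset_insert _ hKI, card_insert_of_notMem (hnot hKI)⟩,
        belowLine_insert hW h⟩, hnot hKI⟩
  · ext K
    rw [mem_nonMemberSubfamily, mem_belowLineSets, mem_belowLineSets, hIco]
    constructor
    · rintro ⟨⟨⟨hKI, hKc⟩, hW⟩, hK⟩
      exact ⟨⟨(subset_insert_iff_of_notMem hK).1 hKI, hKc⟩, hW⟩
    · rintro ⟨⟨hKI, hKc⟩, hW⟩
      exact ⟨⟨⟨hKI.trans (subset_insert _ _), hKc⟩, hW⟩, hnot hKI⟩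

/-- The ballot theorem for lines of slope `1 / (s + 1)`. -/
theorem card_belowLineSets (s o : ℕ) {m k : ℕ} (h : (s + 1) * (k + 1) ≤ m + 1) :
    #(belowLineSets s o m (k + 1)) + s * m.choose k = m.choose (k + 1) := by
  induction m generalizing k with
  | zero =>
    obtain ⟨rfl, rfl⟩ : k = 0 ∧ s = 0 := by constructor <;> nlinarith
    simp [belowLineSets_eq_empty]
  | succ m ih =>
    by_cases hb : (s + 1) * (k + 1) ≤ m + 1
    · rw [card_belowLineSets_succ_succ hb, Nat.choose_succ_succ' m k]
      have hk := ih hb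
      rcases k with _ | k
      · simp only [belowLineSets_zero_right, card_singleton, Nat.choose_zero_right] at hk ⊢
        omega
      · have hk' := ih (k := k) (by nlinarith)
        rw [Nat.choose_succ_succ' m k, mul_add]
        omega
    · rw [belowLineSets_eq_empty (by omega), card_empty, zero_add]
      have hsub : m + 1 - k = s * (k + 1) := by rw [add_one_mul] at h hb; omega
      refine Nat.eq_of_mul_eq_mul_right (Nat.add_one_pos k) ?_
      rw [Nat.choose_succ_right_eq, hsub]
      ring

end BelowLine

section RandomPermutation

lemma expect_apply_smul {G X : Type*} [Group G] [Fintype G] [MulAction G X]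
    {x : X} {O : Finset X} (hO : (O : Set X) = MulAction.orbit G x) (f : X → ℝ) :
    𝔼 g : G, f (g • x) = 𝔼 y ∈ O, f y := by
  have hne : O.Nonempty := ⟨x, mem_coe.1 (hO ▸ MulAction.mem_orbit_self x)⟩
  have htranslate : ∀ y ∈ O, 𝔼 g : G, f (g • y) = 𝔼 g : G, f (g • x) := by
    intro y hy
    obtain ⟨h, rfl⟩ : y ∈ MulAction.orbit G x := hO ▸ mem_coe.2 hy
    exact Fintype.expect_equiv (Equiv.mulRight h) _ _ fun g => by simp [mul_smul]
  have hpermute : ∀ g : G, 𝔼 y ∈ O, f (g • y) = 𝔼 y ∈ O, f y := by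
    intro g
    have hmem : ∀ h : G, ∀ y ∈ O, h • y ∈ O := fun h y hy => by
      rw [← mem_coe, hO] at hy ⊢
      exact MulAction.mem_orbit_of_mem_orbit h hy
    exact expect_nbij' (g • ·) (g⁻¹ • ·) (hmem g) (hmem g⁻¹) (by simp) (by simp) (by simp)
  calc 𝔼 g : G, f (g • x) = 𝔼 y ∈ O, 𝔼 g : G, f (g • y) := by
        rw [expect_congr rfl htranslate, expect_const hne]
    _ = 𝔼 g : G, 𝔼 y ∈ O, f (g • y) := expect_comm _ _ _
    _ = 𝔼 y ∈ O, f y := by rw [expect_congr rfl fun g _ => hpermute g, Fintype.expect_const]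

lemma expect_indicator_smul_mem {G X : Type*} [Group G] [Fintype G] [MulAction G X]
    [DecidableEq X] {x : X} {S O : Finset X} (hO : (O : Set X) = MulAction.orbit G x)
    (hS : S ⊆ O) : 𝔼 g : G, (if g • x ∈ S then (1 : ℝ) else 0) = #S / #O := by
  rw [expect_apply_smul hO fun y => if y ∈ S then (1 : ℝ) else 0, expect_eq_sum_div_card,
    sum_boole, filter_mem_eq_inter, inter_eq_right.2 hS]

lemma expect_sum_sub_sq_le {Ω ι : Type*} [Fintype Ω] [Nonempty Ω] [Fintype ι] {X : ι → Ω → ℝ}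
    {a : ℝ} (hidem : ∀ i ω, X i ω * X i ω = X i ω) (hmean : ∀ i, 𝔼 ω, X i ω = a)
    (hcorr : ∀ i j, i ≠ j → 𝔼 ω, X i ω * X j ω ≤ a ^ 2) :
    𝔼 ω, (∑ i, X i ω - a * Fintype.card ι) ^ 2 ≤ Fintype.card ι * (a * (1 - a)) := by
  classical
  have hcov : ∀ i j, 𝔼 ω, (X i ω - a) * (X j ω - a) ≤ if i = j then a * (1 - a) else 0 := by
    intro i j
    have hexpand : 𝔼 ω, (X i ω - a) * (X j ω - a) = 𝔼 ω, X i ω * X j ω - a ^ 2 := by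
      calc _ = 𝔼 ω, (X i ω * X j ω - a * X j ω - a * X i ω + a ^ 2) :=
            expect_congr rfl fun ω _ => by ring
        _ = _ := by
            rw [expect_add_distrib, expect_sub_distrib, expect_sub_distrib, ← mul_expect,
              ← mul_expect, hmean, hmean, Fintype.expect_const]
            ring
    rw [hexpand]
    split_ifs with hij
    · subst hij
      simp only [hidem, hmean]
      linarith
    · linarith [hcorr i j hij]
  calc 𝔼 ω, (∑ i, X i ω - a * Fintype.card ι) ^ 2
      = 𝔼 ω, ∑ i, ∑ j, (X i ω - a) * (X j ω - a) := by
        refine expect_congr rfl fun ω _ => ?_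
        rw [← sum_mul_sum, sum_sub_distrib, sum_const, card_univ, nsmul_eq_mul]
        ring
    _ = ∑ i, ∑ j, 𝔼 ω, (X i ω - a) * (X j ω - a) := by simp only [expect_sum_comm]
    _ ≤ ∑ i, ∑ j, if i = j then a * (1 - a) else 0 :=
        sum_le_sum fun i _ => sum_le_sum fun j _ => hcov i j
    _ = Fintype.card ι * (a * (1 - a)) := by simp

lemma exists_disjoint_blocks {β : Type*} [Fintype β] {l t : ℕ} (h : t * l ≤ Fintype.card β) :
    ∃ B : Fin t → Finset β, (∀ i, #(B i) = l) ∧ Pairwise (Function.onFun Disjoint B) := by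
  obtain ⟨f⟩ : Nonempty (Fin t × Fin l ↪ β) :=
    Function.Embedding.nonempty_of_card_le (by simpa using h)
  refine ⟨fun i => univ.map ((Function.Embedding.sectR i (Fin l)).trans f), fun i => by simp,
    fun i j hij => disjoint_left.2 fun x hx hx' => ?_⟩
  obtain ⟨a, -, rfl⟩ := mem_map.1 hx
  obtain ⟨b, -, hb⟩ := mem_map.1 hx'
  exact hij (congrArg Prod.fst (f.injective hb)).symm

variable {α : Type*} [DecidableEq α]

lemma exists_perm_smul_pair [Finite α] {P Q P' Q' : Finset α} (hPQ : Disjoint P Q)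
    (hPQ' : Disjoint P' Q') (hP : #P = #P') (hQ : #Q = #Q') :
    ∃ σ : Equiv.Perm α, σ • P = P' ∧ σ • Q = Q' := by
  have := Fintype.ofFinite α
  let e := ((Equiv.Finset.union P Q hPQ).symm.trans
    ((equivOfCardEq hP).sumCongr (equivOfCardEq hQ))).trans (Equiv.Finset.union P' Q' hPQ')
  refine ⟨e.extendSubtype, eq_of_subset_of_card_le ?_ (by rw [card_smul_finset, hP]),
    eq_of_subset_of_card_le ?_ (by rw [card_smul_finset, hQ])⟩
  · intro y hy
    obtain ⟨x, hx, rfl⟩ := mem_smul_finset.1 hy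
    rw [Equiv.Perm.smul_def, e.extendSubtype_apply_of_mem x (mem_union_left _ hx)]
    simp [e, hx]
  · intro y hy
    obtain ⟨x, hx, rfl⟩ := mem_smul_finset.1 hy
    rw [Equiv.Perm.smul_def, e.extendSubtype_apply_of_mem x (mem_union_right _ hx)]
    simp [e, hx]

lemma disjoint_perm_smul {P Q : Finset α} (h : Disjoint P Q) (σ : Equiv.Perm α) :
    Disjoint (σ • P) (σ • Q) :=
  (disjoint_image (MulAction.injective σ)).2 h

variable {l t : ℕ} {B : Fin t → Finset α}

/-- The number of blocks `B i` that the permutation `σ` moves into the family `F`. -/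
def hitCount (B : Fin t → Finset α) (F : Finset (Finset α)) (σ : Equiv.Perm α) : ℕ :=
  #{i | σ • B i ∈ F}

lemma cast_hitCount (F : Finset (Finset α)) (σ : Equiv.Perm α) :
    (hitCount B F σ : ℝ) = ∑ i, if σ • B i ∈ F then 1 else 0 := by
  rw [hitCount, sum_boole]

lemma hitCount_le (F : Finset (Finset α)) (σ : Equiv.Perm α) : hitCount B F σ ≤ t :=
  (card_le_univ _).trans (Fintype.card_fin t).le

lemma hitCount_mono {F G : Finset (Finset α)} (hFG : F ⊆ G) (σ : Equiv.Perm α) :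
    hitCount B F σ ≤ hitCount B G σ :=
  card_le_card (monotone_filter_right _ fun _ _ h => hFG h)

lemma exists_card_add_le_of_forall_injective {ι : Type*} {s : ℕ} (T : Fin (s + 1) → Finset ι)
    (h : ∀ f : Fin (s + 1) → ι, Function.Injective f → ∃ j, f j ∉ T j) :
    ∃ j : Fin (s + 1), #(T j) + j ≤ s := by
  classical
  by_contra! hlarge
  refine absurd ((all_card_le_biUnion_card_iff_exists_injective T).1 fun J => ?_) ?_
  · rcases J.eq_empty_or_nonempty with rfl | hJ
    · simp
    have hJle : #J ≤ s + 1 - (J.min' hJ : ℕ) :=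
      Fin.card_Ici (J.min' hJ) ▸ card_le_card fun x hx => mem_Ici.2 (min'_le _ _ hx)
    have hTle : #(T (J.min' hJ)) ≤ #(J.biUnion T) :=
      card_le_card (subset_biUnion_of_mem T (min'_mem _ hJ))
    have := hlarge (J.min' hJ)
    lia
  · rintro ⟨f, hf, hfT⟩
    obtain ⟨j, hj⟩ := h f hf
    exact hj (hfT j)

/-- Hall's theorem, applied to the bipartite graph between families and blocks. -/
lemma exists_hitCount_add_le {s : ℕ} {F : ℕ → Finset (Finset α)}
    (hd : Pairwise (Function.onFun Disjoint B))
    (hF : ∀ g : Fin (s + 1) → Finset α, Pairwise (Function.onFun Disjoint g) →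
      ∃ j : Fin (s + 1), g j ∉ F j)
    (σ : Equiv.Perm α) : ∃ j ≤ s, hitCount B (F j) σ + j ≤ s := by
  obtain ⟨j, hj⟩ := exists_card_add_le_of_forall_injective
    (fun j : Fin (s + 1) => ({i | σ • B i ∈ F j} : Finset (Fin t))) (fun f hf => by
      obtain ⟨j, hj⟩ := hF (fun j => σ • B (f j)) fun i j hij =>
        disjoint_perm_smul (hd (hf.ne hij)) σ
      exact ⟨j, by simpa using hj⟩)
  exact ⟨j, Nat.lt_succ_iff.1 j.2, hj⟩

end RandomPermutation

section RandomBlocks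

variable {α : Type*} [Fintype α] [LinearOrder α] {P Q : Finset α}
  {F : Finset (Finset α)} {l t : ℕ} {B : Fin t → Finset α}

lemma coe_powersetCard_univ_eq_orbit (P : Finset α) :
    (univ.powersetCard #P : Finset (Finset α)) = MulAction.orbit (Equiv.Perm α) P := by
  ext P'
  simp only [mem_coe, mem_powersetCard_univ, MulAction.mem_orbit_iff]
  constructor
  · intro hP
    obtain ⟨σ, hσ, -⟩ := exists_perm_smul_pair (disjoint_empty_right P) (disjoint_empty_right P')
      hP.symm rfl
    exact ⟨σ, hσ⟩
  · rintro ⟨σ, rfl⟩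
    exact card_smul_finset σ P

lemma coe_disjointPairs_powersetCard_univ_eq_orbit (h : Disjoint P Q) :
    (disjointPairs (univ.powersetCard #P) (univ.powersetCard #Q) : Finset (Finset α × Finset α)) =
      MulAction.orbit (Equiv.Perm α) (P, Q) := by
  ext ⟨P', Q'⟩
  simp only [disjointPairs, coe_filter, mem_product, mem_powersetCard_univ, Set.mem_ofPred_eq,
    MulAction.mem_orbit_iff, Prod.smul_mk, Prod.mk.injEq]
  constructor
  · rintro ⟨⟨hP, hQ⟩, h'⟩
    exact exists_perm_smul_pair h h' hP.symm hQ.symm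
  · rintro ⟨σ, rfl, rfl⟩
    simp only [card_smul_finset, disjoint_perm_smul h σ, and_self]

lemma card_disjointPairs_powersetCard_univ (a b : ℕ) :
    #(disjointPairs (univ.powersetCard a) (univ.powersetCard b) : Finset (Finset α × Finset α)) =
      (Fintype.card α).choose a * (Fintype.card α - a).choose b := by
  have hcount : ∀ A ∈ (univ : Finset α).powersetCard a,
      #{B ∈ (univ : Finset α).powersetCard b | Disjoint A B} = (Fintype.card α - a).choose b := by
    intro A hA
    have hcompl : {B ∈ (univ : Finset α).powersetCard b | Disjoint A B} = Aᶜ.powersetCard b := by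
      ext B
      rw [mem_filter, mem_powersetCard_univ, mem_powersetCard, subset_compl_iff_disjoint_left,
        and_comm]
    rw [hcompl, card_powersetCard, card_compl, (mem_powersetCard.1 hA).2]
  rw [card_disjointPairs_eq_sum, sum_const_nat hcount, card_powersetCard, card_univ]

lemma expect_smul_mem (hF : F ⊆ univ.powersetCard #P) :
    𝔼 σ : Equiv.Perm α, (if σ • P ∈ F then (1 : ℝ) else 0) =
      #F / (Fintype.card α).choose #P := by
  rw [expect_indicator_smul_mem (coe_powersetCard_univ_eq_orbit P) hF, card_powersetCard, card_univ]

lemma ShiftedOn.expect_smul_mem_mul_smul_mem_le (hshift : ShiftedOn univ F)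
    (hF : F ⊆ univ.powersetCard #P) (hQ : #Q = #P) (hPQ : Disjoint P Q) :
    𝔼 σ : Equiv.Perm α, (if σ • P ∈ F then (1 : ℝ) else 0) * (if σ • Q ∈ F then 1 else 0) ≤
      (#F / (Fintype.card α).choose #P) ^ 2 := by
  have hsub : disjointPairs F F ⊆ disjointPairs (univ.powersetCard #P) (univ.powersetCard #Q) :=
    filter_subset_filter _ (product_subset_product hF (hQ ▸ hF))
  have hle : #P + #P ≤ Fintype.card α := by
    simpa only [card_union_of_disjoint hPQ, hQ] using card_le_univ (P ∪ Q)
  have hcorr := hshift.card_disjointPairs_mul_choose_le hF hF hshift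
  calc _ = 𝔼 σ : Equiv.Perm α, (if σ • (P, Q) ∈ disjointPairs F F then (1 : ℝ) else 0) := by
        refine expect_congr rfl fun σ _ => ?_
        simp only [Prod.smul_mk, disjointPairs, mem_filter, mem_product, disjoint_perm_smul hPQ σ,
          and_true, ite_zero_mul_ite_zero, mul_one]
    _ = #(disjointPairs F F) /
          ((Fintype.card α).choose #P * (Fintype.card α - #P).choose #P : ℕ) := by
        rw [expect_indicator_smul_mem (coe_disjointPairs_powersetCard_univ_eq_orbit hPQ) hsub,
          card_disjointPairs_powersetCard_univ, hQ]
    _ ≤ _ := by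
        have h₁ : 0 < (Fintype.card α).choose #P := Nat.choose_pos (by lia)
        have h₂ : 0 < (Fintype.card α - #P).choose #P := Nat.choose_pos (by lia)
        rw [card_univ] at hcorr
        rw [div_pow, div_le_div_iff₀ (by positivity) (by positivity)]
        have h₃ := Nat.mul_le_mul_right ((Fintype.card α).choose #P) hcorr
        norm_cast
        linarith

lemma expect_hitCount (hB : ∀ i, #(B i) = l) (hF : F ⊆ univ.powersetCard l) :
    𝔼 σ, (hitCount B F σ : ℝ) = #F / (Fintype.card α).choose l * t := by
  have hblock : ∀ i, 𝔼 σ : Equiv.Perm α, (if σ • B i ∈ F then (1 : ℝ) else 0) =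
      #F / (Fintype.card α).choose l := by
    intro i
    rw [expect_smul_mem (by rwa [hB i]), hB i]
  simp only [cast_hitCount, expect_sum_comm, hblock, sum_const, card_univ, Fintype.card_fin,
    nsmul_eq_mul, mul_comm]

lemma ShiftedOn.expect_hitCount_sub_sq_le (hshift : ShiftedOn univ F)
    (hB : ∀ i, #(B i) = l) (hd : Pairwise (Function.onFun Disjoint B))
    (hF : F ⊆ univ.powersetCard l) :
    𝔼 σ, ((hitCount B F σ : ℝ) - #F / (Fintype.card α).choose l * t) ^ 2 ≤
      t * (#F / (Fintype.card α).choose l * (1 - #F / (Fintype.card α).choose l)) := by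
  simp only [cast_hitCount]
  have hvar := expect_sum_sub_sq_le (ι := Fin t) (Ω := Equiv.Perm α)
    (X := fun i σ => if σ • B i ∈ F then (1 : ℝ) else 0) (a := #F / (Fintype.card α).choose l)
    (fun i σ => by simp) (fun i => by rw [expect_smul_mem (by rwa [hB i]), hB i])
    fun i j hij => by
      have hcorr := hshift.expect_smul_mem_mul_smul_mem_le (P := B i) (Q := B j) (by rwa [hB i])
        (by rw [hB i, hB j]) (hd hij)
      rwa [hB i] at hcorr
  rwa [Fintype.card_fin] at hvar

end RandomBlocks

section Restriction

variable {α : Type*} [LinearOrder α] {U : Finset α} {F G : Finset (Finset α)} {l : ℕ}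

/-- The members of `F` contained in `U`, as sets of elements of the subtype `U`. -/
def restrictTo (U : Finset α) (F : Finset (Finset α)) : Finset (Finset U) :=
  {A | A.map (.subtype _) ∈ F}

lemma mem_restrictTo {A : Finset U} : A ∈ restrictTo U F ↔ A.map (.subtype _) ∈ F := by
  simp only [restrictTo, mem_filter, mem_univ, true_and]

lemma restrictTo_mono (h : F ⊆ G) : restrictTo U F ⊆ restrictTo U G :=
  fun _ hA => mem_restrictTo.2 (h (mem_restrictTo.1 hA))

lemma restrictTo_subset_powersetCard (hF : F ⊆ U.powersetCard l) :
    restrictTo U F ⊆ univ.powersetCard l := by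
  intro A hA
  rw [mem_powersetCard_univ, ← card_map (.subtype _)]
  exact (mem_powersetCard.1 (hF (mem_restrictTo.1 hA))).2

lemma card_restrictTo (hF : F ⊆ U.powersetCard l) : #(restrictTo U F) = #F := by
  refine card_nbij (·.map (.subtype _)) (fun A hA => mem_restrictTo.1 hA)
    (map_injective _).injOn fun A hA => ⟨A.subtype (· ∈ U), ?_⟩
  have hAU : (A.subtype (· ∈ U)).map (.subtype _) = A :=
    subtype_map_of_mem fun x hx => (mem_powersetCard.1 (hF hA)).1 hx
  exact ⟨mem_restrictTo.2 (hAU.symm ▸ hA), hAU⟩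

lemma ShiftedOn.shiftedOn_restrictTo (h : ShiftedOn U F) : ShiftedOn univ (restrictTo U F) := by
  intro A hA x hx y _ hyx hyA
  rw [mem_restrictTo] at hA ⊢
  rw [map_insert, map_erase]
  exact h _ hA _ (mem_map_of_mem _ hx) _ y.2 hyx (by simpa using hyA)

end Restriction

section HitProfile

lemma sub_mul_sub_le_sum {s m : ℕ} {c : ℝ} {g : ℕ → ℝ} (hanti : AntitoneOn g (Set.Iic s))
    (hle : ∀ i ≤ s, g i ≤ c) (hm : m ≤ s) :
    ((s : ℝ) - m) * (c - g m) ≤ ∑ i ∈ range s, (c - g i) := by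
  have hsub : Ico m s ⊆ range s := fun i hi => mem_range.2 (mem_Ico.1 hi).2
  calc ((s : ℝ) - m) * (c - g m) = #(Ico m s) • (c - g m) := by
        rw [Nat.card_Ico, nsmul_eq_mul, Nat.cast_sub hm]
    _ ≤ ∑ i ∈ Ico m s, (c - g i) := card_nsmul_le_sum _ _ _ fun i hi => by
        obtain ⟨hmi, his⟩ := mem_Ico.1 hi
        linarith [hanti (Set.mem_Iic.2 hm) (Set.mem_Iic.2 his.le) hmi]
    _ ≤ ∑ i ∈ range s, (c - g i) := sum_le_sum_of_subset_of_nonneg hsub fun i hi _ =>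
        sub_nonneg.2 (hle i (mem_range.1 hi).le)

lemma exists_lt_le_min_mul {s d j : ℕ} (hd : 0 < d) (hj : j ≤ s) :
    ∃ i < s / d + 2, j ≤ min s (i * d) ∧ min s (i * d) ≤ j + d := by
  have hdiv : j / d ≤ s / d := Nat.div_le_div_right hj
  have hmul : j / d * d ≤ j := Nat.div_mul_le_self j d
  have hlt : j < j / d * d + d := Nat.lt_div_mul_add hd
  exact ⟨j / d + 1, by lia, by rw [add_one_mul]; lia, by rw [add_one_mul]; lia⟩

/-- The constants `1.666` and `0.3985` enter here: `u * (t - u)` is compared with `s * u` for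
`u ≤ 0.663 * s` and with `0.3985 * s * t` beyond. In the application `u = s - j`, where `j` is an
index at which Hall's condition nearly fails in the mean. -/
lemma add_one_mul_le_or_le_of_mul_sub_le {s t u a D : ℝ} (hs : 10 ^ 16 ≤ s) (ht : 1.666 * s ≤ t)
    (ht' : t ≤ 1.666 * s + 1) (hu : 0.1 * s ≤ u) (hus : u ≤ s) (ha : a * t ≤ u + s / 20000)
    (hD : u * (1.666 * s - (u + s / 20000)) ≤ D * t) :
    (s + 1) * a ≤ D ∨ 0.3985 * s + 1 ≤ D := by
  have htpos : 0 < t := by linarith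
  rcases le_total u (0.663 * s) with hlarge | hlarge
  · have hprod := mul_nonneg (sub_nonneg.2 hu) (sub_nonneg.2 hlarge)
    refine .inl (le_of_mul_le_mul_right ?_ htpos)
    calc (s + 1) * a * t = (s + 1) * (a * t) := mul_assoc _ _ _
      _ ≤ (s + 1) * (u + s / 20000) := by gcongr
      _ ≤ u * (1.666 * s - (u + s / 20000)) := by nlinarith
      _ ≤ D * t := hD
  · have hprod := mul_nonneg (sub_nonneg.2 hus) (sub_nonneg.2 hlarge)
    refine .inr (le_of_mul_le_mul_right ?_ htpos)
    calc (0.3985 * s + 1) * t ≤ (0.3985 * s + 1) * (1.666 * s + 1) := by gcongr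
      _ ≤ u * (1.666 * s - (u + s / 20000)) := by nlinarith
      _ ≤ D * t := hD

/-- Integer random variables `x 0 ≥ ⋯ ≥ x s` with means `α j * t` and at most binomial variance,
such that Hall's condition for a system of distinct representatives always fails. They model the
numbers of blocks, out of `t`, falling into families of density `α j`. -/
structure HitProfile {Ω : Type*} [Fintype Ω] (s t : ℕ) (x : ℕ → Ω → ℕ) (α : ℕ → ℝ) : Prop where
  antitoneOn : ∀ ω, AntitoneOn (x · ω) (Set.Iic s)
  le : ∀ j ω, x j ω ≤ t
  exists_add_le : ∀ ω, ∃ j ≤ s, x j ω + j ≤ s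
  expect_eq : ∀ j ≤ s, 𝔼 ω, (x j ω : ℝ) = α j * t
  expect_sub_sq_le : ∀ j ≤ s, 𝔼 ω, ((x j ω : ℝ) - α j * t) ^ 2 ≤ t * (α j * (1 - α j))

namespace HitProfile

variable {Ω : Type*} [Fintype Ω] {s t : ℕ} {x : ℕ → Ω → ℕ} {α : ℕ → ℝ} {i j : ℕ}

lemma cast_antitoneOn (h : HitProfile s t x α) (ω : Ω) :
    AntitoneOn (fun j => (x j ω : ℝ)) (Set.Iic s) :=
  fun _ hi _ hj hij => Nat.cast_le.2 (h.antitoneOn ω hi hj hij)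

lemma cast_le (h : HitProfile s t x α) (j : ℕ) (ω : Ω) : (x j ω : ℝ) ≤ t :=
  Nat.cast_le.2 (h.le j ω)

lemma density_nonneg (h : HitProfile s t x α) (ht : 0 < t) (hj : j ≤ s) : 0 ≤ α j := by
  have hmean : 0 ≤ α j * t := h.expect_eq j hj ▸ expect_nonneg fun ω _ => Nat.cast_nonneg _
  exact nonneg_of_mul_nonneg_left hmean (Nat.cast_pos.2 ht)

lemma density_antitoneOn (h : HitProfile s t x α) (ht : 0 < t) : AntitoneOn α (Set.Iic s) := by
  intro i hi j hj hij
  have hmean : α j * t ≤ α i * t := by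
    rw [← h.expect_eq i hi, ← h.expect_eq j hj]
    exact expect_le_expect fun ω _ => h.cast_antitoneOn ω hi hj hij
  exact le_of_mul_le_mul_right hmean (Nat.cast_pos.2 ht)

/-- If Hall's condition fails only at some `j > s / 2`, then all the families beyond `j` are hit
rarely; otherwise `x (s / 2)` deviates from its mean by at least `0.1 * s`. -/
lemma add_one_mul_le (h : HitProfile s t x α) (hs : 10000 ≤ s) (ht : 1.666 * (s : ℝ) ≤ t)
    (hmid : 1.1 * (s : ℝ) ≤ α (s / 2) * t) (ω : Ω) :
    ((s : ℝ) + 1) * x s ω ≤ 0.9 * ∑ i ∈ range s, ((t : ℝ) - x i ω) +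
      (s + 1) * t / (0.1 * s) ^ 2 * ((x (s / 2) ω : ℝ) - α (s / 2) * t) ^ 2 := by
  have hs' : (10000 : ℝ) ≤ s := mod_cast hs
  obtain ⟨j, hj, hxj⟩ := h.exists_add_le ω
  rcases le_or_gt j (s / 2) with hjm | hmj
  · have hxm : (x (s / 2) ω : ℝ) ≤ s := by
      have := h.antitoneOn ω (Set.mem_Iic.2 hj) (Set.mem_Iic.2 (Nat.div_le_self s 2)) hjm
      exact mod_cast (by lia : x (s / 2) ω ≤ s)
    have hdev : (0.1 * (s : ℝ)) ^ 2 ≤ ((x (s / 2) ω : ℝ) - α (s / 2) * t) ^ 2 := by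
      rw [sub_sq_comm]
      exact pow_le_pow_left₀ (by positivity) (by linarith) 2
    have hsum : (0 : ℝ) ≤ ∑ i ∈ range s, ((t : ℝ) - x i ω) :=
      sum_nonneg fun i _ => sub_nonneg.2 (h.cast_le i ω)
    calc ((s : ℝ) + 1) * x s ω ≤ (s + 1) * t := by gcongr; exact h.le s ω
      _ = (s + 1) * t / (0.1 * s) ^ 2 * (0.1 * s) ^ 2 := by field_simp
      _ ≤ (s + 1) * t / (0.1 * s) ^ 2 * ((x (s / 2) ω : ℝ) - α (s / 2) * t) ^ 2 := by gcongr
      _ ≤ _ := le_add_of_nonneg_left (by positivity)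
  · have hxj' : (x j ω : ℝ) + j ≤ s := mod_cast hxj
    have hj' : (s : ℝ) ≤ 2 * j := mod_cast (by lia : s ≤ 2 * j)
    have hjs : (j : ℝ) ≤ s := mod_cast hj
    have hxs := h.cast_antitoneOn ω (Set.mem_Iic.2 hj) (Set.mem_Iic.2 le_rfl) hj
    have hsum := sub_mul_sub_le_sum (h.cast_antitoneOn ω) (fun i _ => h.cast_le i ω) hj
    have hgap : (s : ℝ) + 1 ≤ 0.9 * (t - x j ω) := by linarith
    calc ((s : ℝ) + 1) * x s ω ≤ (s + 1) * (s - j) := by gcongr; linarith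
      _ ≤ 0.9 * (t - x j ω) * (s - j) := by gcongr
      _ = 0.9 * ((s - j) * (t - x j ω)) := by ring
      _ ≤ 0.9 * ∑ i ∈ range s, ((t : ℝ) - x i ω) := by gcongr
      _ ≤ _ := le_add_of_nonneg_right (by positivity)

variable [Nonempty Ω]

lemma density_le_one (h : HitProfile s t x α) (ht : 0 < t) (hj : j ≤ s) : α j ≤ 1 := by
  have hmean : α j * t ≤ 1 * t := by
    rw [← h.expect_eq j hj, one_mul]
    exact expect_le univ_nonempty fun ω _ => h.cast_le j ω
  exact le_of_mul_le_mul_right hmean (Nat.cast_pos.2 ht)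

lemma expect_sum_sub (h : HitProfile s t x α) :
    𝔼 ω, ∑ i ∈ range s, ((t : ℝ) - x i ω) = t * ∑ i ∈ range s, (1 - α i) := by
  rw [expect_sum_comm, mul_sum]
  refine sum_congr rfl fun i hi => ?_
  rw [expect_sub_distrib, Fintype.expect_const, h.expect_eq i (mem_range.1 hi).le]
  ring

lemma expect_sub_sq_le_mul_one_sub (h : HitProfile s t x α) (ht : 0 < t) (hj : j ≤ s) :
    𝔼 ω, ((x j ω : ℝ) - α j * t) ^ 2 ≤ t * (1 - α j) := by
  refine (h.expect_sub_sq_le j hj).trans (mul_le_mul_of_nonneg_left ?_ (Nat.cast_nonneg t))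
  exact mul_le_of_le_one_left (sub_nonneg.2 (h.density_le_one ht hj)) (h.density_le_one ht hj)

lemma add_one_mul_density_le_of_mid_large (h : HitProfile s t x α) (hs : 10000 ≤ s)
    (ht : 1.666 * (s : ℝ) ≤ t) (ht' : (t : ℝ) ≤ 2 * s)
    (hmid : 1.1 * (s : ℝ) ≤ α (s / 2) * t) :
    (s + 1) * α s ≤ ∑ i ∈ range s, (1 - α i) := by
  have hs' : (10000 : ℝ) ≤ s := mod_cast hs
  have htpos : (0 : ℝ) < t := by linarith
  have htpos' : 0 < t := mod_cast htpos
  have hms : s / 2 ≤ s := Nat.div_le_self s 2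
  set D := ∑ i ∈ range s, (1 - α i)
  have hone : ∀ i ≤ s, α i ≤ 1 := fun i => h.density_le_one htpos'
  have hDnonneg : 0 ≤ D := sum_nonneg fun i hi => sub_nonneg.2 (hone i (mem_range.1 hi).le)
  have hmidD : (1 - α (s / 2)) * s ≤ 2 * D := by
    have hhalf : ((s / 2 : ℕ) : ℝ) ≤ s / 2 := Nat.cast_div_le
    have := sub_mul_sub_le_sum (h.density_antitoneOn htpos') hone hms
    nlinarith [hone _ hms]
  have hvar : (s + 1) * t / (0.1 * s) ^ 2 * 𝔼 ω, ((x (s / 2) ω : ℝ) - α (s / 2) * t) ^ 2 ≤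
      0.1 * (t * D) := by
    have hcoeff : 200 * ((s : ℝ) + 1) * t / s ^ 3 ≤ 0.1 := by
      rw [div_le_iff₀ (by positivity)]
      have : 200 * ((s : ℝ) + 1) * t ≤ 200 * (s + 1) * (2 * s) := by gcongr
      have : (10000 : ℝ) * s ^ 2 ≤ s * s ^ 2 := by gcongr
      nlinarith
    calc _ ≤ (s + 1) * t / (0.1 * s) ^ 2 * (t * (1 - α (s / 2))) := by
          gcongr
          exact h.expect_sub_sq_le_mul_one_sub htpos' hms
      _ = (s + 1) * t / (0.1 * s) ^ 2 / s * (t * ((1 - α (s / 2)) * s)) := by field_simp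
      _ ≤ (s + 1) * t / (0.1 * s) ^ 2 / s * (t * (2 * D)) := by gcongr
      _ = 200 * (s + 1) * t / s ^ 3 * (t * D) := by field_simp; ring
      _ ≤ 0.1 * (t * D) := by gcongr
  have hmean := expect_le_expect (s := univ) fun ω _ => h.add_one_mul_le hs ht hmid ω
  rw [expect_add_distrib, ← mul_expect, ← mul_expect, ← mul_expect, h.expect_sum_sub,
    h.expect_eq s le_rfl] at hmean
  exact le_of_mul_le_mul_left (by linarith) htpos

/-- Chebyshev's inequality on a grid of `80001` indices, which is fine enough since `x` is
monotone. -/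
lemma exists_density_mul_le (h : HitProfile s t x α) (hs : 10 ^ 16 ≤ s) (ht : 0 < t)
    (ht' : (t : ℝ) ≤ 2 * s) : ∃ j ≤ s, α j * t ≤ s - j + s / 20000 := by
  by_contra! hlarge
  have hs' : (10 ^ 16 : ℝ) ≤ s := mod_cast hs
  set d := s / 80000 + 1
  set p : ℕ → ℕ := fun i => min s (i * d)
  have hd' : (d : ℝ) ≤ s / 40000 := by
    rw [le_div_iff₀ (by norm_num)]
    exact mod_cast (by lia : d * 40000 ≤ s)
  have hgrid : s / d + 2 ≤ 80001 := by
    have : s / d < 80000 := by rw [Nat.div_lt_iff_lt_mul (by lia)]; lia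
    lia
  have hdev : ∀ ω, ((s : ℝ) / 40000) ^ 2 ≤
      ∑ i ∈ range 80001, ((x (p i) ω : ℝ) - α (p i) * t) ^ 2 := by
    intro ω
    obtain ⟨j, hj, hxj⟩ := h.exists_add_le ω
    obtain ⟨i, hi, hji, hij⟩ := exists_lt_le_min_mul (d := d) (by lia) hj
    have hps : p i ≤ s := min_le_left _ _
    have hxp : x (p i) ω + p i ≤ s + d := by
      have : x (p i) ω ≤ x j ω := h.antitoneOn ω (Set.mem_Iic.2 hj) (Set.mem_Iic.2 hps) hji
      lia
    have hxp' : (x (p i) ω : ℝ) + p i ≤ s + d := mod_cast hxp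
    calc ((s : ℝ) / 40000) ^ 2 ≤ ((x (p i) ω : ℝ) - α (p i) * t) ^ 2 := by
          rw [sub_sq_comm]
          exact pow_le_pow_left₀ (by positivity) (by linarith [hlarge (p i) hps]) 2
      _ ≤ _ := single_le_sum (f := fun i => ((x (p i) ω : ℝ) - α (p i) * t) ^ 2)
          (fun i _ => sq_nonneg _) (mem_range.2 (hi.trans_le hgrid))
  have hvar : ∀ i ∈ range 80001, 𝔼 ω, ((x (p i) ω : ℝ) - α (p i) * t) ^ 2 ≤ 2 * s := by
    intro i _
    have hps : p i ≤ s := min_le_left _ _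
    refine (h.expect_sub_sq_le_mul_one_sub ht hps).trans (le_trans ?_ ht')
    exact mul_le_of_le_one_right (Nat.cast_nonneg t) (by linarith [h.density_nonneg ht hps])
  have hmean : ((s : ℝ) / 40000) ^ 2 ≤ 80001 * (2 * s) := by
    calc ((s : ℝ) / 40000) ^ 2
        ≤ 𝔼 ω, ∑ i ∈ range 80001, ((x (p i) ω : ℝ) - α (p i) * t) ^ 2 :=
          le_expect univ_nonempty fun ω _ => hdev ω
      _ = ∑ i ∈ range 80001, 𝔼 ω, ((x (p i) ω : ℝ) - α (p i) * t) ^ 2 := expect_sum_comm _ _ _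
      _ ≤ 80001 * (2 * s) := (sum_le_card_nsmul _ _ _ hvar).trans (by simp)
  nlinarith

lemma add_one_mul_density_le_of_mid_small (h : HitProfile s t x α) (hs : 10 ^ 16 ≤ s)
    (ht : 1.666 * (s : ℝ) ≤ t) (hmid : α (s / 2) * t ≤ 1.1 * s)
    (hlast : α s * t ≤ 0.1 * s + s / 20000) :
    (s + 1) * α s ≤ ∑ i ∈ range s, (1 - α i) := by
  have hs' : (10 ^ 16 : ℝ) ≤ s := mod_cast hs
  have htpos : (0 : ℝ) < t := by linarith
  have htpos' : 0 < t := mod_cast htpos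
  have hsum := sub_mul_sub_le_sum (h.density_antitoneOn htpos')
    (fun i hi => h.density_le_one htpos' hi) (Nat.div_le_self s 2)
  have hhalf : ((s / 2 : ℕ) : ℝ) ≤ s / 2 := Nat.cast_div_le
  have hmid' : α (s / 2) ≤ 0.67 := by
    refine le_of_mul_le_mul_right (hmid.trans ?_) htpos
    linarith
  have hlast' : α s ≤ 0.07 := by
    refine le_of_mul_le_mul_right (hlast.trans ?_) htpos
    linarith
  calc (s + 1) * α s ≤ (s + 1) * 0.07 := by gcongr
    _ ≤ (s - s / 2) * (1 - 0.67) := by linarith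
    _ ≤ (s - (s / 2 : ℕ)) * (1 - α (s / 2)) := by gcongr; linarith
    _ ≤ _ := hsum

lemma dichotomy (h : HitProfile s t x α) (hs : 10 ^ 16 ≤ s) (ht : 1.666 * (s : ℝ) ≤ t)
    (ht' : (t : ℝ) ≤ 1.666 * s + 1) :
    (s + 1) * α s ≤ ∑ i ∈ range s, (1 - α i) ∨
      0.3985 * s + 1 ≤ ∑ i ∈ range s, (1 - α i) := by
  have hs' : (10 ^ 16 : ℝ) ≤ s := mod_cast hs
  have htpos : 0 < t := by
    have : (0 : ℝ) < t := by linarith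
    exact mod_cast this
  rcases le_total (1.1 * (s : ℝ)) (α (s / 2) * t) with hmid | hmid
  · exact .inl (h.add_one_mul_density_le_of_mid_large (by lia) ht (by linarith) hmid)
  obtain ⟨j, hj, hαj⟩ := h.exists_density_mul_le hs htpos (by linarith)
  have hanti := h.density_antitoneOn htpos
  have hsum := sub_mul_sub_le_sum hanti (fun i hi => h.density_le_one htpos hi) hj
  have hlast : α s * t ≤ s - j + s / 20000 := by
    refine le_trans ?_ hαj
    gcongr
    exact hanti (Set.mem_Iic.2 hj) (Set.mem_Iic.2 le_rfl) hj
  have hjs : (j : ℝ) ≤ s := mod_cast hj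
  rcases le_total ((s : ℝ) - j) (0.1 * s) with hsmall | hsmall
  · exact .inl (h.add_one_mul_density_le_of_mid_small hs ht hmid (by linarith))
  refine add_one_mul_le_or_le_of_mul_sub_le hs' ht ht' hsmall
    (sub_le_self _ (Nat.cast_nonneg j)) hlast ?_
  calc ((s : ℝ) - j) * (1.666 * s - (s - j + s / 20000)) ≤ (s - j) * (t - α j * t) := by
        gcongr
    _ = (s - j) * (1 - α j) * t := by ring
    _ ≤ (∑ i ∈ range s, (1 - α i)) * t := by gcongr

end HitProfile

end HitProfile

section Link

variable {α : Type*} [LinearOrder α] {F : Finset (Finset α)} {U V G : Finset α} {l : ℕ} {i j : α}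

/-- `linkOn F U l i` is the `l`-uniform part of the link of `i` in `F` on the vertex set `U`: the
`l`-subsets of `U` that become members of `F` when `i` is added. -/
def linkOn (F : Finset (Finset α)) (U : Finset α) (l : ℕ) (i : α) : Finset (Finset α) :=
  {G ∈ U.powersetCard l | insert i G ∈ F}

lemma mem_linkOn : G ∈ linkOn F U l i ↔ (G ⊆ U ∧ #G = l) ∧ insert i G ∈ F := by
  rw [linkOn, mem_filter, mem_powersetCard]

lemma linkOn_subset_powersetCard : linkOn F U l i ⊆ U.powersetCard l :=
  filter_subset _ _

lemma ShiftedOn.shiftedOn_linkOn (hS : ShiftedOn U F) (hi : i ∉ U) :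
    ShiftedOn U (linkOn F U l i) := by
  intro G hG x hx y hy hyx hyG
  rw [mem_linkOn] at hG ⊢
  obtain ⟨⟨hGU, hGl⟩, hiG⟩ := hG
  have hix : i ≠ x := fun h => hi (h ▸ hGU hx)
  refine ⟨⟨insert_subset hy ((erase_subset _ _).trans hGU), ?_⟩, ?_⟩
  · rw [card_insert_erase_of_mem hx hyG, hGl]
  · rw [insert_comm, ← erase_insert_of_ne hix]
    refine hS _ hiG x (mem_insert_of_mem hx) y hy hyx ?_
    rw [mem_insert, not_or]
    exact ⟨fun h => hi (h ▸ hy), hyG⟩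

lemma ShiftedOn.linkOn_subset_linkOn (hS : ShiftedOn V F) (hi : i ∈ V) (hij : i ≤ j) (hiU : i ∉ U)
    (hjU : j ∉ U) : linkOn F U l j ⊆ linkOn F U l i := by
  obtain rfl | hlt := hij.eq_or_lt
  · rfl
  intro G hG
  rw [mem_linkOn] at hG ⊢
  refine ⟨hG.1, ?_⟩
  have hjG : j ∉ G := fun h => hjU (hG.1.1 h)
  have hiG : i ∉ insert j G := by
    rw [mem_insert, not_or]
    exact ⟨hlt.ne, fun h => hiU (hG.1.1 h)⟩
  simpa only [erase_insert hjG] using hS _ hG.2 j (mem_insert_self _ _) i hi hlt hiG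

lemma ShiftedOn.shadow_filter_subset_subset_linkOn (hF : F ⊆ V.powersetCard (l + 1))
    (hS : ShiftedOn V F) (hi : i ∈ V) (hU : ∀ u ∈ U, i < u) :
    ∂ {A ∈ F | A ⊆ U} ⊆ linkOn F U l i := by
  intro G hG
  obtain ⟨A, hA, x, hx, rfl⟩ := mem_shadow_iff.1 hG
  obtain ⟨hAF, hAU⟩ := mem_filter.1 hA
  have hAl : #A = l + 1 := (mem_powersetCard.1 (hF hAF)).2
  rw [mem_linkOn, card_erase_of_mem hx, hAl]
  exact ⟨⟨(erase_subset _ _).trans hAU, rfl⟩,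
    hS A hAF x hx i hi (hU x (hAU hx)) fun h => lt_irrefl i (hU i (hAU h))⟩

lemma ShiftedOn.restrict (hS : ShiftedOn U F) : ShiftedOn U {A ∈ F | A ⊆ U} := by
  intro A hA x hx y hy hyx hyA
  rw [mem_filter] at hA ⊢
  exact ⟨hS A hA.1 x hx y hy hyx hyA, insert_subset hy ((erase_subset _ _).trans hA.2)⟩

end Link

section LinkCounts

variable {F : Finset (Finset ℕ)} {U : Finset ℕ} {N s l n : ℕ}

lemma exists_notMem_linkOn (hs : matchingNumber F ≤ s) (hU : ∀ u ∈ U, s < u)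
    {g : Fin (s + 1) → Finset ℕ} (hd : Pairwise (Function.onFun Disjoint g)) :
    ∃ j : Fin (s + 1), g j ∉ linkOn F U l j := by
  by_contra! hg
  have hnot : ∀ i j : Fin (s + 1), (i : ℕ) ∉ g j := fun i j h =>
    absurd (hU _ ((mem_linkOn.1 (hg j)).1.1 h)) (by have := i.2; omega)
  have hcard := card_le_matchingNumber_of_pairwiseDisjoint (t := univ)
    (f := fun i : Fin (s + 1) => insert (i : ℕ) (g i)) (fun i _ => (mem_linkOn.1 (hg i)).2)
    (fun i _ => insert_nonempty _ _) fun i _ j _ hij => by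
      rw [Function.onFun, disjoint_insert_left, disjoint_insert_right, mem_insert, not_or]
      exact ⟨⟨fun h => hij (Fin.ext h), hnot i j⟩, hnot j i, hd hij⟩
  rw [card_univ, Fintype.card_fin] at hcard
  omega

lemma ShiftedOn.matchingNumber_linkOn_le (hS : ShiftedOn (range n) F) (hs : matchingNumber F ≤ s)
    (hsn : s < n) (hU : ∀ u ∈ U, s < u) : matchingNumber (linkOn F U l s) ≤ s := by
  refine matchingNumber_le fun M hM hd => ?_
  by_contra! hlt
  obtain ⟨e⟩ : Nonempty (Fin (s + 1) ↪ M) :=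
    Function.Embedding.nonempty_of_card_le (by simpa using hlt)
  obtain ⟨j, hj⟩ := exists_notMem_linkOn (l := l) hs hU (g := fun i => e i) fun i j hij =>
    hd (e i).2 (e j).2 fun h => hij (e.injective (Subtype.ext h))
  have hjs : (j : ℕ) ≤ s := Nat.lt_succ_iff.1 j.2
  exact hj (hS.linkOn_subset_linkOn (mem_range.2 (hjs.trans_lt hsn)) hjs
    (fun h => absurd (hU _ h) hjs.not_gt) (fun h => lt_irrefl _ (hU _ h)) (hM (e j).2))

lemma ShiftedOn.card_filter_subset_le (hF : F ⊆ (range n).powersetCard (l + 1))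
    (hS : ShiftedOn (range n) F) (hs : matchingNumber F ≤ s) (hsn : s < n) (hUn : U ⊆ range n)
    (hU : ∀ u ∈ U, s < u) : #{A ∈ F | A ⊆ U} ≤ s * #(linkOn F U l s) := by
  have hB : {A ∈ F | A ⊆ U} ⊆ U.powersetCard (l + 1) := fun A hA =>
    mem_powersetCard.2 ⟨(mem_filter.1 hA).2, (mem_powersetCard.1 (hF (mem_filter.1 hA).1)).2⟩
  calc #{A ∈ F | A ⊆ U}
      ≤ matchingNumber {A ∈ F | A ⊆ U} * #(∂ {A ∈ F | A ⊆ U}) :=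
        (hS.mono hUn).restrict.card_le_matchingNumber_mul_card_shadow hB
    _ ≤ s * #(linkOn F U l s) :=
        Nat.mul_le_mul ((matchingNumber_mono (filter_subset _ _)).trans hs)
          (card_le_card (hS.shadow_filter_subset_subset_linkOn hF (mem_range.2 hsn) hU))

lemma sum_card_linkOn_add_card_filter_subset_le (F : Finset (Finset ℕ)) (l : ℕ)
    (hU : ∀ u ∈ U, s < u) :
    ∑ i ∈ range (s + 1), #(linkOn F U l i) + #{A ∈ F | A ⊆ U} ≤ #F := by
  have hnot : ∀ G ⊆ U, ∀ i ∈ range (s + 1), i ∉ G := fun G hG i hi h =>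
    absurd (hU i (hG h)) (by have := mem_range.1 hi; omega)
  have hcard : ∀ i ∈ range (s + 1), #(linkOn F U l i) = #((linkOn F U l i).image (insert i)) := by
    intro i hi
    refine (card_image_of_injOn fun G hG G' hG' h => ?_).symm
    rw [← erase_insert (hnot G (mem_linkOn.1 hG).1.1 i hi), h,
      erase_insert (hnot G' (mem_linkOn.1 hG').1.1 i hi)]
  have hdisj : (range (s + 1) : Set ℕ).PairwiseDisjoint
      fun i => (linkOn F U l i).image (insert i) := by
    intro i hi j _ hij
    rw [Function.onFun, disjoint_left]
    simp only [mem_image]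
    rintro _ ⟨G, -, rfl⟩ ⟨G', hG', h⟩
    have hiG' : i ∈ insert j G' := h ▸ mem_insert_self i G
    exact (mem_insert.1 hiG').elim hij (hnot G' (mem_linkOn.1 hG').1.1 i hi)
  rw [sum_congr rfl hcard, ← card_biUnion hdisj, ← card_union_of_disjoint]
  · refine card_le_card (union_subset (biUnion_subset.2 fun i _ => ?_) (filter_subset _ _))
    exact image_subset_iff.2 fun G hG => (mem_linkOn.1 hG).2
  · rw [disjoint_left]
    intro A hA hAU
    obtain ⟨i, hi, hAi⟩ := mem_biUnion.1 hA
    obtain ⟨G, -, rfl⟩ := mem_image.1 hAi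
    exact hnot _ (mem_filter.1 hAU).2 i hi (mem_insert_self i G)

lemma card_linkOn_add_card_linkOn_sdiff {V : Finset ℕ} {i : ℕ} (hUV : U ⊆ V) (hiV : i ∈ V)
    (hiU : i ∉ U) :
    #(linkOn F U l i) + #(linkOn (V.powersetCard (l + 1) \ F) U l i) = (#U).choose l := by
  have hcompl : linkOn (V.powersetCard (l + 1) \ F) U l i =
      {G ∈ U.powersetCard l | insert i G ∉ F} := by
    refine filter_congr fun G hG => ?_
    obtain ⟨hGU, hGl⟩ := mem_powersetCard.1 hG
    have hGV : insert i G ∈ V.powersetCard (l + 1) := by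
      rw [mem_powersetCard, card_insert_of_notMem fun h => hiU (hGU h), hGl]
      exact ⟨insert_subset hiV (hGU.trans hUV), rfl⟩
    rw [mem_sdiff, and_iff_right hGV]
  rw [hcompl, linkOn, card_filter_add_card_filter_not, card_powersetCard]

lemma card_filter_subset_add_card_filter_subset_sdiff {V : Finset ℕ} {k : ℕ} (hUV : U ⊆ V)
    (hF : F ⊆ V.powersetCard k) :
    #{A ∈ F | A ⊆ U} + #{A ∈ V.powersetCard k \ F | A ⊆ U} = (#U).choose k := by
  have hVU : {A ∈ V.powersetCard k | A ⊆ U} = U.powersetCard k := by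
    ext A
    rw [mem_filter, mem_powersetCard, mem_powersetCard]
    exact ⟨fun h => ⟨h.2, h.1.2⟩, fun h => ⟨⟨h.1.trans hUV, h.2⟩, h.1⟩⟩
  rw [← card_union_of_disjoint (disjoint_filter_filter disjoint_sdiff), ← filter_union,
    union_sdiff_of_subset hF, hVU, card_powersetCard]

/-- Among the sets outside `F`, only those with at most one element in `range (s + 1)` are
counted. -/
theorem card_add_choose_le_sum_card_linkOn (hF : F ⊆ (range (N + s + 1)).powersetCard (l + 1)) :
    #F + ((s + 1) * N.choose l + N.choose (l + 1)) ≤ (N + s + 1).choose (l + 1) +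
      (∑ i ∈ range (s + 1), #(linkOn F (Ico (s + 1) (N + s + 1)) l i) +
        #{A ∈ F | A ⊆ Ico (s + 1) (N + s + 1)}) := by
  set U := Ico (s + 1) (N + s + 1) with hU
  have hUN : #U = N := by rw [hU, Nat.card_Ico]; omega
  have hUV : U ⊆ range (N + s + 1) := fun x hx => mem_range.2 (mem_Ico.1 hx).2
  have hmissing := sum_card_linkOn_add_card_filter_subset_le (s := s)
    ((range (N + s + 1)).powersetCard (l + 1) \ F) l (U := U) fun u hu => (mem_Ico.1 hu).1
  have hlinks := sum_congr rfl fun i (hi : i ∈ range (s + 1)) =>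
    card_linkOn_add_card_linkOn_sdiff (F := F) (l := l) hUV
      (range_subset_range.2 (by omega) hi) (by rw [hU, mem_Ico]; have := mem_range.1 hi; omega)
  have hbottom := card_filter_subset_add_card_filter_subset_sdiff hUV hF
  have hcompl := card_sdiff_add_card_eq_card hF
  rw [sum_add_distrib, sum_const, card_range, smul_eq_mul, hUN] at hlinks
  rw [hUN] at hbottom
  rw [card_powersetCard, card_range] at hcompl
  omega

end LinkCounts

section TailFamily

variable {E B : Finset (Finset ℕ)} {a b l w : ℕ}

/-- `tailFamily E w` consists of the members of `E` all of whose elements are at least `w`. -/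
def tailFamily (E : Finset (Finset ℕ)) (w : ℕ) : Finset (Finset ℕ) :=
  {G ∈ E | ∀ g ∈ G, w ≤ g}

lemma mem_tailFamily {G : Finset ℕ} : G ∈ tailFamily E w ↔ G ∈ E ∧ ∀ g ∈ G, w ≤ g :=
  mem_filter

lemma tailFamily_eq_self (hE : E ⊆ (Ico a b).powersetCard l) : tailFamily E a = E :=
  filter_true_of_mem fun _ hG _ hg => (mem_Ico.1 ((mem_powersetCard.1 (hE hG)).1 hg)).1

lemma tailFamily_subset_powersetCard (hE : E ⊆ (Ico a b).powersetCard l) :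
    tailFamily E w ⊆ (Ico w b).powersetCard l := by
  intro G hG
  obtain ⟨hGE, hGw⟩ := mem_tailFamily.1 hG
  obtain ⟨hGI, hGl⟩ := mem_powersetCard.1 (hE hGE)
  exact mem_powersetCard.2
    ⟨fun x hx => mem_Ico.2 ⟨hGw x hx, (mem_Ico.1 (hGI hx)).2⟩, hGl⟩

lemma nonMemberSubfamily_tailFamily (E : Finset (Finset ℕ)) (w : ℕ) :
    (tailFamily E w).nonMemberSubfamily w = tailFamily E (w + 1) := by
  ext G
  simp only [mem_nonMemberSubfamily, mem_tailFamily]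
  constructor
  · rintro ⟨⟨hG, hGw⟩, hw⟩
    exact ⟨hG, fun g hg => (hGw g hg).lt_of_ne fun h => hw (h ▸ hg)⟩
  · rintro ⟨hG, hGw⟩
    exact ⟨⟨hG, fun g hg => (Nat.le_succ w).trans (hGw g hg)⟩, fun hw => lt_irrefl w (hGw w hw)⟩

lemma memberSubfamily_tailFamily (hE : E ⊆ (Ico a b).powersetCard (l + 1)) :
    (tailFamily E w).memberSubfamily w = linkOn E (Ico (w + 1) b) l w := by
  ext G
  simp only [mem_memberSubfamily, mem_tailFamily, mem_linkOn, forall_mem_insert, le_refl, true_and]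
  constructor
  · rintro ⟨⟨hG, hGw⟩, hw⟩
    obtain ⟨hGI, hGl⟩ := mem_powersetCard.1 (hE hG)
    rw [card_insert_of_notMem hw] at hGl
    refine ⟨⟨fun x hx => mem_Ico.2 ⟨(hGw x hx).lt_of_ne fun h => hw (h ▸ hx), ?_⟩, by omega⟩, hG⟩
    exact (mem_Ico.1 (hGI (mem_insert_of_mem hx))).2
  · rintro ⟨⟨hGI, -⟩, hG⟩
    have hGw : ∀ g ∈ G, w + 1 ≤ g := fun g hg => (mem_Ico.1 (hGI hg)).1
    exact ⟨⟨hG, fun g hg => (Nat.le_succ w).trans (hGw g hg)⟩, fun hw => lt_irrefl w (hGw w hw)⟩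

lemma card_tailFamily_eq_add (hE : E ⊆ (Ico a b).powersetCard (l + 1)) (w : ℕ) :
    #(tailFamily E w) = #(tailFamily E (w + 1)) + #(linkOn E (Ico (w + 1) b) l w) := by
  rw [← card_memberSubfamily_add_card_nonMemberSubfamily w, nonMemberSubfamily_tailFamily,
    memberSubfamily_tailFamily hE, add_comm]

lemma card_tailFamily_le_add_sum (h : ∂ B ⊆ E) (w m : ℕ) :
    #(tailFamily B w) ≤
      #(tailFamily B (w + m)) + ∑ y ∈ range m, #(tailFamily E (w + (y + 1))) := by
  induction m with
  | zero => simp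
  | succ m ih =>
    have hmember : (tailFamily B (w + m)).memberSubfamily (w + m) ⊆
        tailFamily E (w + (m + 1)) := by
      intro G hG
      rw [mem_memberSubfamily, mem_tailFamily] at hG
      obtain ⟨⟨hGB, hGw⟩, hw⟩ := hG
      refine mem_tailFamily.2 ⟨h (mem_shadow_iff_insert_mem.2 ⟨_, hw, hGB⟩), fun g hg => ?_⟩
      exact (hGw g (mem_insert_of_mem hg)).lt_of_ne fun hgw => hw (hgw ▸ hg)
    have hsplit := card_memberSubfamily_add_card_nonMemberSubfamily (w + m) (tailFamily B (w + m))
    rw [nonMemberSubfamily_tailFamily] at hsplit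
    have := card_le_card hmember
    rw [sum_range_succ, ← add_assoc, ← add_assoc]
    simp only [← add_assoc] at this ih hsplit ⊢
    omega

lemma ShiftedOn.linkOn_succ_subset_nonMemberSubfamily (hS : ShiftedOn (Ico a b) E)
    (hw : w ∈ Ico a b) :
    linkOn E (Ico (w + 2) b) l (w + 1) ⊆
      (linkOn E (Ico (w + 1) b) l w).nonMemberSubfamily (w + 1) := by
  intro G hG
  have hG' := hS.linkOn_subset_linkOn hw (Nat.le_succ w) (by simp) (by simp) hG
  obtain ⟨⟨hGV, hGl⟩, hGE⟩ := mem_linkOn.1 hG'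
  exact mem_nonMemberSubfamily.2
    ⟨mem_linkOn.2 ⟨⟨hGV.trans (Ico_subset_Ico_left (Nat.le_succ _)), hGl⟩, hGE⟩,
      fun h => by simpa using hGV h⟩

lemma ShiftedOn.shadow_linkOn_succ_subset_memberSubfamily (hS : ShiftedOn (Ico a b) E)
    (hw : w ∈ Ico a b) :
    ∂ (linkOn E (Ico (w + 2) b) (l + 1) (w + 1)) ⊆
      (linkOn E (Ico (w + 1) b) (l + 1) w).memberSubfamily (w + 1) := by
  intro G hG
  obtain ⟨x, hxG, hxGE⟩ := mem_shadow_iff_insert_mem.1 hG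
  obtain ⟨⟨hGV, hGl⟩, hGE⟩ := mem_linkOn.1 hxGE
  rw [card_insert_of_notMem hxG] at hGl
  have hGw : ∀ g ∈ G, w + 1 < g := fun g hg => (mem_Ico.1 (hGV (mem_insert_of_mem hg))).1
  have hx := mem_Ico.1 (hGV (mem_insert_self x G))
  have hwG : w + 1 ∉ G := fun h => lt_irrefl _ (hGw _ h)
  have hGV' : G ⊆ Ico (w + 1) b :=
    ((subset_insert x G).trans hGV).trans (Ico_subset_Ico_left (Nat.le_succ _))
  rw [mem_memberSubfamily, mem_linkOn, card_insert_of_notMem hwG]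
  refine ⟨⟨⟨insert_subset (mem_Ico.2 (by omega)) hGV', hGl⟩, ?_⟩, hwG⟩
  rw [insert_comm]
  have hshift := hS _ hGE x (mem_insert_of_mem (mem_insert_self _ _)) w hw (by omega) (by
    simp only [mem_insert, not_or]
    exact ⟨by omega, by omega, fun h => by have := hGw w h; omega⟩)
  rwa [erase_insert_of_ne (by omega), erase_insert hxG, insert_comm] at hshift

lemma ShiftedOn.card_linkOn_succ_mul_le (hS : ShiftedOn (Ico a b) E) (hw : w ∈ Ico a b) :
    #(linkOn E (Ico (w + 2) b) l (w + 1)) * (b - a + l) ≤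
      #(linkOn E (Ico (w + 1) b) l w) * (b - a) := by
  have hnon := card_le_card (hS.linkOn_succ_subset_nonMemberSubfamily (l := l) hw)
  have hsplit := card_memberSubfamily_add_card_nonMemberSubfamily (w + 1)
    (linkOn E (Ico (w + 1) b) l w)
  cases l with
  | zero => exact Nat.mul_le_mul_right _ (by omega)
  | succ l =>
    have hshadow := card_le_card (hS.shadow_linkOn_succ_subset_memberSubfamily (l := l) hw)
    have hlym := card_mul_le_card_shadow_mul_of_subset
      (linkOn_subset_powersetCard (F := E) (U := Ico (w + 2) b) (l := l + 1) (i := w + 1))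
    have hground : #(Ico (w + 2) b) - l ≤ b - a := by
      have := (mem_Ico.1 hw).1
      rw [Nat.card_Ico]
      omega
    calc #(linkOn E (Ico (w + 2) b) (l + 1) (w + 1)) * (b - a + (l + 1))
        = #(linkOn E (Ico (w + 2) b) (l + 1) (w + 1)) * (l + 1)
          + #(linkOn E (Ico (w + 2) b) (l + 1) (w + 1)) * (b - a) := by ring
      _ ≤ #((linkOn E (Ico (w + 1) b) (l + 1) w).memberSubfamily (w + 1)) * (b - a)
          + #((linkOn E (Ico (w + 1) b) (l + 1) w).nonMemberSubfamily (w + 1)) * (b - a) :=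
        Nat.add_le_add (hlym.trans (Nat.mul_le_mul hshadow hground)) (Nat.mul_le_mul_right _ hnon)
      _ = #(linkOn E (Ico (w + 1) b) (l + 1) w) * (b - a) := by rw [← add_mul, hsplit]

end TailFamily

section BelowLineCounts

variable {s o : ℕ} {K : Finset ℕ}

lemma BelowLine.card_filter_lt_le {c m : ℕ} (hK : BelowLine s o K) (hm : m < (s + 1) * (c + 1)) :
    #{x ∈ K | x < o + m} ≤ c :=
  Nat.lt_succ_iff.1 (lt_of_mul_lt_mul_left ((hK m).trans_lt hm) (Nat.zero_le _))

lemma BelowLine.le_of_mem (hK : BelowLine s o K) {x : ℕ} (hx : x ∈ K) : o + s ≤ x := by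
  by_contra! h
  have hcard := hK.card_filter_lt_le (c := 0) (m := s) (by omega)
  rw [Nat.le_zero, card_eq_zero] at hcard
  exact notMem_empty x (hcard ▸ mem_filter.2 ⟨hx, h⟩)

lemma BelowLine.eq_of_mem_of_lt (hK : BelowLine s o K) {x y : ℕ} (hx : x ∈ K) (hy : y ∈ K)
    (hx' : x < o + (2 * s + 1)) (hy' : y < o + (2 * s + 1)) : x = y :=
  card_le_one.1 (hK.card_filter_lt_le (c := 1) (by omega)) x (mem_filter.2 ⟨hx, hx'⟩) y
    (mem_filter.2 ⟨hy, hy'⟩)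

lemma BelowLine.insert_self (hK : BelowLine s (s + 1) K) : BelowLine s 0 (insert s K) := by
  intro m
  rcases le_or_gt m s with hm | hm
  · rw [filter_false_of_mem]
    · simp
    · intro x hx
      obtain rfl | hx := mem_insert.1 hx
      · omega
      · have := hK.le_of_mem hx
        omega
  · obtain ⟨m, rfl⟩ := Nat.exists_eq_add_of_le hm
    rw [filter_insert, if_pos (by omega), zero_add]
    calc (s + 1) * #(insert s {x ∈ K | x < s + 1 + m})
        ≤ (s + 1) * (#{x ∈ K | x < s + 1 + m} + 1) := Nat.mul_le_mul_left _ (card_insert_le _ _)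
      _ ≤ s + 1 + m := by
        rw [mul_add_one, add_comm]
        exact Nat.add_le_add_left (hK m) _

lemma BelowLine.erase (hK : BelowLine s 0 K) {x : ℕ} (hx : x ∈ K) (hxs : x < 2 * s + 1) :
    BelowLine s (s + 1) (K.erase x) := by
  intro m
  rcases le_or_gt m s with hm | hm
  · rw [filter_false_of_mem]
    · simp
    · intro y hy hym
      obtain ⟨hyx, hyK⟩ := mem_erase.1 hy
      exact hyx (hK.eq_of_mem_of_lt hyK hx (by omega) (by omega))
  · have hline := hK (s + 1 + m)
    rw [zero_add] at hline
    rw [filter_erase, card_erase_of_mem (mem_filter.2 ⟨hx, by omega⟩), Nat.mul_sub, mul_one]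
    omega

lemma card_add_card_le_choose {F G : Finset (Finset ℕ)} {a b l : ℕ}
    (hF : F ⊆ (Ico a b).powersetCard l) (hG : G ⊆ (Ico a b).powersetCard l) (h : Disjoint F G) :
    #F + #G ≤ (b - a).choose l := by
  rw [← card_union_of_disjoint h, ← Nat.card_Ico, ← card_powersetCard]
  exact card_le_card (union_subset hF hG)

variable {F : Finset (Finset ℕ)} {N l : ℕ}

lemma ShiftedOn.card_tailFamily_linkOn_add_le (hF : F ⊆ (range (N + s + 1)).powersetCard (l + 1))
    (hS : ShiftedOn (range (N + s + 1)) F) (hs : matchingNumber F ≤ s) :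
    #(tailFamily (linkOn F (Ico (s + 1) (N + s + 1)) l s) (s + 1 + s)) +
      #(belowLineSets s (s + 1) N l) ≤ (N - s).choose l := by
  have hN : N + s + 1 - (s + 1 + s) = N - s := by omega
  rw [← hN]
  refine card_add_card_le_choose (tailFamily_subset_powersetCard linkOn_subset_powersetCard) ?_ ?_
  · intro G hG
    obtain ⟨⟨hGI, hGl⟩, hGline⟩ := mem_belowLineSets.1 hG
    refine mem_powersetCard.2 ⟨fun x hx => mem_Ico.2 ⟨hGline.le_of_mem hx, ?_⟩, hGl⟩
    have := mem_Ico.1 (hGI hx)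
    omega
  · rw [disjoint_left]
    intro G hG hG'
    exact hS.not_belowLine hF l.succ_pos hs (mem_linkOn.1 (mem_tailFamily.1 hG).1).2
      (mem_belowLineSets.1 hG').2.insert_self

/-- Outside the tail, a set below the line has exactly one element in `[s, 2s]`. -/
lemma card_belowLineSets_le_card_tailFamily_add (s N l : ℕ) :
    #(belowLineSets s 0 (N + s + 1) (l + 1)) ≤
      #(tailFamily (belowLineSets s 0 (N + s + 1) (l + 1)) (s + 1 + s)) +
        (s + 1) * #(belowLineSets s (s + 1) N l) := by
  set W := belowLineSets s 0 (N + s + 1) (l + 1)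
  have hsub : {K ∈ W | ¬ ∀ g ∈ K, s + 1 + s ≤ g} ⊆
      (Icc s (2 * s) ×ˢ belowLineSets s (s + 1) N l).image fun p => insert p.1 p.2 := by
    intro K hK
    obtain ⟨hKW, hKtail⟩ := mem_filter.1 hK
    obtain ⟨⟨hKI, hKl⟩, hKline⟩ := mem_belowLineSets.1 hKW
    push Not at hKtail
    obtain ⟨x, hx, hxs⟩ := hKtail
    have hsx := hKline.le_of_mem hx
    refine mem_image.2 ⟨(x, K.erase x), mem_product.2 ⟨mem_Icc.2 (by lia), ?_⟩, insert_erase hx⟩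
    refine mem_belowLineSets.2 ⟨⟨fun y hy => ?_, ?_⟩, hKline.erase hx (by omega)⟩
    · obtain ⟨hyx, hyK⟩ := mem_erase.1 hy
      have hys : 2 * s + 1 ≤ y := by
        by_contra! h
        exact hyx (hKline.eq_of_mem_of_lt hyK hx (by omega) (by omega))
      have := mem_Ico.1 (hKI hyK)
      exact mem_Ico.2 (by omega)
    · rw [card_erase_of_mem hx, hKl, Nat.add_sub_cancel]
  have hcard := (card_le_card hsub).trans card_image_le
  have hIcc : 2 * s + 1 - s = s + 1 := by omega
  rw [card_product, Nat.card_Icc, hIcc] at hcard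
  rw [tailFamily, ← card_filter_add_card_filter_not (s := W) fun K => ∀ g ∈ K, s + 1 + s ≤ g]
  exact Nat.add_le_add_left hcard _

lemma ShiftedOn.card_tailFamily_add_le (hF : F ⊆ (range (N + s + 1)).powersetCard (l + 1))
    (hS : ShiftedOn (range (N + s + 1)) F) (hs : matchingNumber F ≤ s) :
    #(tailFamily F (s + 1 + s)) + #(belowLineSets s 0 (N + s + 1) (l + 1)) ≤
      (N - s).choose (l + 1) + (s + 1) * #(belowLineSets s (s + 1) N l) := by
  have hN : N + s + 1 - (s + 1 + s) = N - s := by omega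
  have hFI : F ⊆ (Ico 0 (N + s + 1)).powersetCard (l + 1) := by rwa [← range_eq_Ico]
  have hW : belowLineSets s 0 (N + s + 1) (l + 1) ⊆ (Ico 0 (N + s + 1)).powersetCard (l + 1) :=
    fun K hK => by simpa only [mem_powersetCard, zero_add] using (mem_belowLineSets.1 hK).1
  have htail := card_add_card_le_choose (tailFamily_subset_powersetCard (w := s + 1 + s) hFI)
    (tailFamily_subset_powersetCard hW) <| by
      rw [disjoint_left]
      intro K hK hK'
      exact hS.not_belowLine hF l.succ_pos hs (mem_tailFamily.1 hK).1
        (mem_belowLineSets.1 (mem_tailFamily.1 hK').1).2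
  rw [hN] at htail
  have := card_belowLineSets_le_card_tailFamily_add s N l
  omega

end BelowLineCounts

section CentreOfMass

variable {s : ℕ} {a : ℕ → ℝ}

lemma sum_mul_nonpos_of_antitoneOn {q w : ℕ → ℝ} {c : ℕ} (hc : c < s)
    (hq : AntitoneOn q (Set.Iio s)) (hqc : 0 ≤ q c) (hw : ∀ z ≤ c, w z ≤ 0)
    (hw' : ∀ z, c < z → z < s → 0 ≤ w z) (hsum : ∑ z ∈ range s, w z ≤ 0) :
    ∑ z ∈ range s, q z * w z ≤ 0 := by
  calc ∑ z ∈ range s, q z * w z ≤ ∑ z ∈ range s, q c * w z := by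
        refine sum_le_sum fun z hz => ?_
        rw [mem_range] at hz
        rcases le_or_gt z c with h | h
        · exact mul_le_mul_of_nonpos_right (hq hz hc h) (hw z h)
        · exact mul_le_mul_of_nonneg_right (hq hc hz h.le) (hw' z h hz)
    _ = q c * ∑ z ∈ range s, w z := (mul_sum ..).symm
    _ ≤ 0 := mul_nonpos_of_nonneg_of_nonpos hqc hsum

lemma sum_range_cast (s : ℕ) : ∑ z ∈ range s, (z : ℝ) = s * (s - 1) / 2 := by
  induction s with
  | zero => simp
  | succ n ih => rw [sum_range_succ, ih]; push_cast; ring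

lemma sum_range_cast_sq (s : ℕ) :
    ∑ z ∈ range s, (z : ℝ) ^ 2 = (s - 1) * s * (2 * s - 1) / 6 := by
  induction s with
  | zero => simp
  | succ n ih => rw [sum_range_succ, ih]; push_cast; ring

lemma sum_cast_mul_le_of_antitoneOn (h0 : ∀ z, 0 ≤ a z) (ha : AntitoneOn a (Set.Iio s)) :
    ∑ z ∈ range s, (z : ℝ) * a z ≤ 1 / 2 * s * ∑ z ∈ range s, a z := by
  rcases Nat.eq_zero_or_pos s with rfl | hs
  · simp
  have hcheb := AntivaryOn.card_mul_sum_le_sum_mul_sum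
    (MonotoneOn.antivaryOn (fun _ _ _ _ h => Nat.cast_le.2 h)
      (fun i hi j hj h => ha (mem_range.1 hi) (mem_range.1 hj) h) :
      AntivaryOn (fun z : ℕ => (z : ℝ)) a (range s))
  rw [card_range, sum_range_cast] at hcheb
  have hsum : 0 ≤ ∑ z ∈ range s, a z := sum_nonneg fun z _ => h0 z
  refine le_of_mul_le_mul_left (hcheb.trans ?_) (Nat.cast_pos.2 hs : (0 : ℝ) < s)
  nlinarith [mul_nonneg (Nat.cast_nonneg s : (0 : ℝ) ≤ s) hsum]

lemma sum_sub_mul_sub_nonpos {P : ℝ} (hs : 1 ≤ s) (hsP : s < P) (hP : P ≤ 6.13 * s) :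
    ∑ z ∈ range s, (P - z) * ((z : ℝ) - 0.486 * s) ≤ 0 := by
  have hs' : (1 : ℝ) ≤ s := mod_cast hs
  have hexpand : ∑ z ∈ range s, (P - z) * ((z : ℝ) - 0.486 * s) =
      (P + 0.486 * s) * ∑ z ∈ range s, (z : ℝ) - ∑ z ∈ range s, (z : ℝ) ^ 2
        - s * (P * (0.486 * s)) := by
    have hconst : (s : ℝ) * (P * (0.486 * s)) = ∑ _z ∈ range s, P * (0.486 * s) := by simp
    rw [hconst, mul_sum, ← sum_sub_distrib, ← sum_sub_distrib]
    exact sum_congr rfl fun z _ => by ring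
  have hfactor : (P + 0.486 * s) * (s * (s - 1) / 2) - (s - 1) * s * (2 * s - 1) / 6
      - s * (P * (0.486 * s)) =
      s * (0.014 * (P * s) - P / 2 + 0.486 * s * (s - 1) / 2 - (s - 1) * (2 * s - 1) / 6) := by
    ring
  rw [hexpand, sum_range_cast, sum_range_cast_sq, hfactor]
  refine mul_nonpos_of_nonneg_of_nonpos (by linarith) ?_
  nlinarith [mul_le_mul_of_nonneg_right hP (by linarith : (0 : ℝ) ≤ s)]

/-- The extremal profile is `a z = P - z`: the hypothesis says that `a z / (P - z)` is antitone. -/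
lemma sum_cast_mul_le_of_mul_sub_le {P : ℝ} (h0 : ∀ z, 0 ≤ a z) (hsP : s < P)
    (hP : P ≤ 6.13 * s) (ha : ∀ z < s, a (z + 1) * (P - z) ≤ a z * (P - z - 1)) :
    ∑ z ∈ range s, (z : ℝ) * a z ≤ 0.486 * s * ∑ z ∈ range s, a z := by
  rcases Nat.eq_zero_or_pos s with rfl | hs
  · simp
  have hs' : (1 : ℝ) ≤ s := mod_cast hs
  have hpos : ∀ z ≤ s, 0 < P - z := fun z hz => by
    have : (z : ℝ) ≤ s := mod_cast hz
    linarith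
  have hanti : AntitoneOn (fun z => a z / (P - z)) (Set.Iio s) := by
    refine antitoneOn_of_add_one_le Set.ordConnected_Iio fun z _ hz _ => ?_
    have hzs : z < s := hz
    refine (div_le_div_iff₀ (hpos _ hzs) (hpos _ hzs.le)).2 ?_
    push_cast
    linarith [ha z hzs]
  have hc : ⌊0.486 * (s : ℝ)⌋₊ < s := by
    rw [Nat.floor_lt (by positivity)]
    linarith
  have hmain := sum_mul_nonpos_of_antitoneOn (w := fun z => (P - z) * ((z : ℝ) - 0.486 * s)) hc
    hanti (div_nonneg (h0 _) (hpos _ hc.le).le) (fun z hz => ?_) (fun z hz hzs => ?_)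
    (sum_sub_mul_sub_nonpos hs hsP hP)
  · have hcancel : ∑ z ∈ range s, a z / (P - z) * ((P - z) * ((z : ℝ) - 0.486 * s)) =
        ∑ z ∈ range s, (z : ℝ) * a z - 0.486 * s * ∑ z ∈ range s, a z := by
      rw [mul_sum, ← sum_sub_distrib]
      refine sum_congr rfl fun z hz => ?_
      have := hpos z (mem_range.1 hz).le
      field_simp
    linarith
  · have hzc : (z : ℝ) ≤ 0.486 * s := (Nat.le_floor_iff (by positivity)).1 hz
    exact mul_nonpos_of_nonneg_of_nonpos (hpos z (hz.trans hc.le)).le (by linarith)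
  · have hcz := (Nat.floor_lt (by positivity)).1 hz
    exact mul_nonneg (hpos z hzs.le).le (by linarith)

end CentreOfMass

section RealInequalities

variable {x r κ : ℝ} {l : ℕ}

lemma le_one_add_pow_sub_and_le_one_add_pow_add (hx : 0 ≤ x) (k : ℕ) :
    2 * k * x + k * (k - 1) * (k - 2) * x ^ 3 / 3 ≤ (1 + x) ^ k - (1 - x) ^ k ∧
      2 + k * (k - 1) * x ^ 2 ≤ (1 + x) ^ k + (1 - x) ^ k := by
  induction k with
  | zero => norm_num
  | succ k ih =>
    obtain ⟨hsub, hadd⟩ := ih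
    have hk : (0 : ℝ) ≤ (k : ℝ) * (k - 1) * (k - 2) := by
      rcases k with _ | _ | k
      · simp
      · simp
      · push_cast
        ring_nf
        positivity
    have hk' : 0 ≤ x * (k * (k - 1) * (k - 2) * x ^ 3 / 3) := by positivity
    have hxadd := mul_le_mul_of_nonneg_left hadd hx
    have hxsub := mul_le_mul_of_nonneg_left hsub hx
    push_cast
    constructor <;> (rw [pow_succ (1 + x), pow_succ (1 - x)]; linarith)

lemma one_add_pow_add_le_exp (hx : 0 ≤ x) (l : ℕ) :
    (1 + x) ^ l + l * x ^ 2 / 3 ≤ Real.exp (l * x) := by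
  induction l with
  | zero => simp
  | succ l ih =>
    have hone : (1 : ℝ) ≤ (1 + x) ^ l := one_le_pow₀ (by linarith)
    calc (1 + x) ^ (l + 1) + ((l + 1 : ℕ) : ℝ) * x ^ 2 / 3
        ≤ ((1 + x) ^ l + l * x ^ 2 / 3) * (1 + x + x ^ 2 / 2) := by
          have hcross : 0 ≤ (l : ℝ) * x ^ 2 / 3 * (x + x ^ 2 / 2) := by positivity
          have hquad : x ^ 2 / 2 ≤ (1 + x) ^ l * (x ^ 2 / 2) :=
            le_mul_of_one_le_left (by positivity) hone
          push_cast
          rw [pow_succ]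
          nlinarith [sq_nonneg x]
      _ ≤ Real.exp (l * x) * Real.exp x := by
          gcongr
          exact Real.quadratic_le_exp_of_nonneg hx
      _ = Real.exp ((l + 1 : ℕ) * x) := by
          rw [← Real.exp_add]
          push_cast
          ring_nf

lemma one_add_pow_le_two (hx : 0 ≤ x) (hlx : l * x ≤ 0.61) : (1 + x) ^ l ≤ 2 := by
  have hexp := one_add_pow_add_le_exp hx l
  have htwo : Real.exp (l * x) ≤ 2 := by
    rw [← Real.le_log_iff_exp_le two_pos]
    linarith [Real.log_two_gt_d9]
  have : 0 ≤ l * x ^ 2 / 3 := by positivity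
  linarith

lemma exp_combination_le (h1 : 0.39 ≤ r) (h2 : r ≤ 0.60025) :
    0.028 * (Real.exp (-r) - 1) - 0.486 * r + Real.exp r - 1 - r ^ 2 / 3 ≤ 0.3984 := by
  have hexp := Real.exp_bound' (x := r) (by linarith) (by linarith) (n := 5) (by norm_num)
  have hneg := (abs_le.1 (Real.exp_bound (x := -r) (n := 4)
    (by rw [abs_neg, abs_of_nonneg] <;> linarith) (by norm_num))).2
  rw [abs_neg, abs_of_nonneg (by linarith)] at hneg
  simp only [sum_range_succ, range_zero, sum_empty] at hexp hneg
  norm_num [Nat.factorial] at hexp hneg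
  have hr0 : 0 ≤ r := by linarith
  have hr2 : r ^ 2 ≤ 0.60025 * r := by rw [sq]; exact mul_le_mul_of_nonneg_right h2 hr0
  have hr3 : r ^ 3 ≤ 0.60025 ^ 3 := by gcongr
  have hr4 : r ^ 4 ≤ 0.60025 ^ 4 := by gcongr
  have hr5 : r ^ 5 ≤ 0.60025 ^ 5 := by gcongr
  norm_num at hr3 hr4 hr5
  nlinarith

/-- Up to lower order terms, `tailRatio κ x l` bounds the number of sets missing `{0, …, s}`,
divided by `s * N.choose l`, where `x = s / N` and `κ * s` bounds the mean of `min G - (s + 1)`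
over the members `G` with `min G ≤ 2 * s` of the link of `s`. -/
noncomputable def tailRatio (κ x : ℝ) (l : ℕ) : ℝ :=
  (1 - 2 * κ) * ((1 - x) ^ l - 1) - κ * (l * x) + (1 + x) ^ l - 1 - l * (l - 1) * x ^ 2 / 3

lemma tailRatio_one_le (hx : x ≤ 0.61) : tailRatio (1 / 2) x 1 ≤ 0.3984 := by
  norm_num [tailRatio]
  linarith

lemma tailRatio_le (hx : 0 ≤ x) (hx1 : x ≤ 1) (h1 : 0.39 ≤ l * x) (h2 : l * x ≤ 0.60025) :
    tailRatio 0.486 x l ≤ 0.3984 := by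
  have hexp := one_add_pow_add_le_exp hx l
  have hnum := exp_combination_le h1 h2
  have hneg : (1 - x) ^ l ≤ Real.exp (-(l * x)) := by
    calc (1 - x) ^ l ≤ Real.exp (-x) ^ l :=
          pow_le_pow_left₀ (by linarith) (Real.one_sub_le_exp_neg x) l
      _ = Real.exp (-(l * x)) := by rw [← Real.exp_nat_mul, mul_neg]
  have hsq : (l : ℝ) * (l - 1) * x ^ 2 / 3 = (l * x) ^ 2 / 3 - l * x ^ 2 / 3 := by ring
  rw [tailRatio, hsq]
  linarith

end RealInequalities

section Binomials

variable {N s l : ℕ}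

lemma cast_choose_succ_mul (n k : ℕ) :
    (n.choose (k + 1) : ℝ) * (k + 1) = n.choose k * (n - k) := by
  rcases lt_or_ge n k with h | h
  · simp [Nat.choose_eq_zero_of_lt h, Nat.choose_eq_zero_of_lt (h.trans k.lt_succ_self)]
  · rw [← Nat.cast_sub h]
    exact mod_cast Nat.choose_succ_right_eq n k

lemma choose_mul_pow_le_pow_mul_choose {a b : ℕ} (h : a ≤ b) (l : ℕ) :
    a.choose l * b ^ l ≤ a ^ l * b.choose l := by
  induction l with
  | zero => simp
  | succ l ih =>
    have hratio : (a - l) * b ≤ a * (b - l) := by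
      rw [Nat.sub_mul, Nat.mul_sub]
      exact Nat.sub_le_sub_left (by rw [mul_comm]; exact Nat.mul_le_mul_left l h) _
    refine Nat.le_of_mul_le_mul_right (c := l + 1) ?_ l.succ_pos
    calc a.choose (l + 1) * b ^ (l + 1) * (l + 1)
        = a.choose l * b ^ l * ((a - l) * b) := by
          rw [pow_succ]
          linear_combination b ^ l * b * Nat.choose_succ_right_eq a l
      _ ≤ a ^ l * b.choose l * (a * (b - l)) := Nat.mul_le_mul ih hratio
      _ = a ^ (l + 1) * b.choose (l + 1) * (l + 1) := by
          rw [pow_succ]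
          linear_combination a ^ l * a * (Nat.choose_succ_right_eq b l).symm

lemma cast_choose_le_div_pow_mul_choose {a b : ℕ} (h : a ≤ b) (hb : 0 < b) (l : ℕ) :
    (a.choose l : ℝ) ≤ ((a : ℝ) / b) ^ l * b.choose l := by
  rw [div_pow, div_mul_eq_mul_div, le_div_iff₀ (by positivity)]
  exact mod_cast choose_mul_pow_le_pow_mul_choose h l

lemma cast_choose_sub_le (hs : s ≤ N) (hN : 0 < N) (l : ℕ) :
    ((N - s).choose l : ℝ) ≤ (1 - (s : ℝ) / N) ^ l * N.choose l := by
  have hdiv : 1 - (s : ℝ) / N = ((N - s : ℕ) : ℝ) / N := by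
    rw [Nat.cast_sub hs]
    field_simp
  rw [hdiv]
  exact cast_choose_le_div_pow_mul_choose (Nat.sub_le N s) hN l

lemma one_add_div_pow_mul_choose_le (hN : 0 < N) (s l : ℕ) :
    (1 + (s : ℝ) / N) ^ l * N.choose l ≤ (N + s).choose l := by
  have hdiv : 1 + (s : ℝ) / N = ((N + s : ℕ) : ℝ) / N := by
    push_cast
    field_simp
  rw [hdiv, div_pow, div_mul_eq_mul_div, div_le_iff₀ (by positivity)]
  have hpow := choose_mul_pow_le_pow_mul_choose (Nat.le_add_right N s) l
  have hpow' : (N + s) ^ l * N.choose l ≤ (N + s).choose l * N ^ l := by linarith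
  exact mod_cast hpow'

lemma choose_succ_le_choose_sub_add (l : ℕ) (hs : s ≤ N) :
    N.choose (l + 1) ≤ (N - s).choose (l + 1) + s * (N - 1).choose l := by
  induction s with
  | zero => simp
  | succ s ih =>
    have hprev := ih (by omega)
    have hsub : N - s = N - (s + 1) + 1 := by omega
    rw [hsub, Nat.choose_succ_succ] at hprev
    have hmono : (N - (s + 1)).choose l ≤ (N - 1).choose l := Nat.choose_le_choose _ (by omega)
    nlinarith

lemma mul_choose_succ_le_mul_choose (hN : 0 < N) (s l : ℕ) :
    ((l + 1 : ℕ) : ℝ) * (s / N) * N.choose (l + 1) ≤ s * N.choose l := by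
  have hle : (N.choose l : ℝ) * (N - l) ≤ N.choose l * N := by
    gcongr
    linarith [(Nat.cast_nonneg l : (0 : ℝ) ≤ l)]
  calc ((l + 1 : ℕ) : ℝ) * (s / N) * N.choose (l + 1)
      = s * (N.choose l * (N - l)) / N := by
        rw [← cast_choose_succ_mul]
        push_cast
        ring
    _ ≤ s * (N.choose l * N) / N := by gcongr
    _ = s * N.choose l := by field_simp

end Binomials

section ChooseTail

variable {N s l : ℕ}

lemma one_sub_pow_mul_sub_le {x N : ℝ} (hx : 0 ≤ x) (hN : 0 ≤ N) (l : ℕ) :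
    (1 - x) ^ l * (N - x * N) - (1 + x) ^ l * (N + x * N) ≤
      -((l + 1) * (x * N * (2 + l * (l - 1) * x ^ 2 / 3))) := by
  have hpow := mul_le_mul_of_nonneg_left
    (le_one_add_pow_sub_and_le_one_add_pow_add hx (l + 1)).1 hN
  push_cast at hpow
  rw [pow_succ (1 + x), pow_succ (1 - x)] at hpow
  linarith

lemma cast_choose_sub_succ_mul_le (hs : s ≤ N) (hN : 0 < N) (l : ℕ) :
    ((N - s).choose (l + 1) : ℝ) * (l + 1) ≤ (1 - (s : ℝ) / N) ^ l * N.choose l * (N - s) := by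
  have hsN : (s : ℝ) ≤ N := mod_cast hs
  rw [cast_choose_succ_mul, Nat.cast_sub hs]
  calc ((N - s).choose l : ℝ) * (N - s - l) ≤ (N - s).choose l * (N - s) :=
        mul_le_mul_of_nonneg_left (sub_le_self _ (Nat.cast_nonneg l)) (Nat.cast_nonneg _)
    _ ≤ (1 - (s : ℝ) / N) ^ l * N.choose l * (N - s) :=
        mul_le_mul_of_nonneg_right (cast_choose_sub_le hs hN l) (by linarith)

lemma mul_choose_sub_choose_succ_mul_le (hN : 0 < N) (hl : (s + 1) * l ≤ N + 1) :
    (s * ((N + s + 1).choose l : ℝ) - (N + s + 1).choose (l + 1)) * (l + 1) ≤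
      -((1 + (s : ℝ) / N) ^ l * N.choose l * (N + 1 - l - s * l)) := by
  have hlr : ((s : ℝ) + 1) * l ≤ N + 1 := mod_cast hl
  have hhigh : (1 + (s : ℝ) / N) ^ l * N.choose l ≤ (N + s + 1).choose l :=
    (one_add_div_pow_mul_choose_le hN s l).trans
      (mod_cast Nat.choose_le_choose l (Nat.le_succ (N + s)))
  have hchoose := cast_choose_succ_mul (N + s + 1) l
  push_cast at hchoose
  linear_combination mul_le_mul_of_nonneg_right hhigh
    (by linarith : 0 ≤ (N : ℝ) + 1 - l - s * l) - hchoose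

lemma choose_sub_add_mul_choose_sub_le (hs : s ≤ N) (hN : 0 < N) (hl : (s + 1) * l ≤ N + 1)
    (hx : l * ((s : ℝ) / N) ≤ 0.61) :
    ((N - s).choose (l + 1) : ℝ) + s * (N + s + 1).choose l - (N + s + 1).choose (l + 1) ≤
      N.choose l * (s * ((1 + (s : ℝ) / N) ^ l - 2 - l * (l - 1) * ((s : ℝ) / N) ^ 2 / 3) + 2) := by
  have hNr : (0 : ℝ) < N := mod_cast hN
  have hx0 : (0 : ℝ) ≤ s / N := by positivity
  have hxN : (s : ℝ) / N * N = s := by field_simp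
  have hfirst := cast_choose_sub_succ_mul_le hs hN l
  have hsecond := mul_choose_sub_choose_succ_mul_le hN hl
  have hpow := one_sub_pow_mul_sub_le hx0 hNr.le l
  have htwo := one_add_pow_le_two hx0 hx
  rw [hxN] at hpow
  set x := (s : ℝ) / N
  set R := (1 + x) ^ l
  set Q := (1 - x) ^ l
  set C := (N.choose l : ℝ)
  set D := l * (l - 1) * x ^ 2 / 3
  have hbracket : Q * (N - s) - R * (N + s) + R * s * (l + 1) + R * l ≤
      (s * (R - 2 - D) + 2) * (l + 1) := by
    have := mul_le_mul_of_nonneg_right htwo (Nat.cast_nonneg l : (0 : ℝ) ≤ l)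
    linarith
  have hC : 0 ≤ C := by positivity
  have hRC : 0 ≤ R * C := by positivity
  refine le_of_mul_le_mul_right ?_ (by positivity : (0 : ℝ) < l + 1)
  linarith [mul_le_mul_of_nonneg_left hbracket hC]

/-- The products `s * (s * N.choose l)` cancel up to the coefficient `-κ`, so that
`mul_choose_succ_le_mul_choose` applies. -/
lemma choose_combination_le_tailRatio {κ : ℝ} (hs : s ≤ N) (hN : 0 < N)
    (hl : (s + 1) * (l + 1) ≤ N + 1) (hx : ((l + 1 : ℕ) : ℝ) * ((s : ℝ) / N) ≤ 0.61)
    (hκ0 : 0 ≤ κ) (hκ : κ ≤ 1 / 2) :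
    ((N - s).choose (l + 2) : ℝ) + s * (N + s + 1).choose (l + 1) - (N + s + 1).choose (l + 2)
        + (s + 1) * (N.choose (l + 1) - s * N.choose l)
        + s * ((1 - 2 * κ) * ((N - s).choose (l + 1) - N.choose (l + 1))
          + (1 - κ) * (s * N.choose l)) ≤
      s * N.choose (l + 1) * tailRatio κ (s / N) (l + 1) + 3 * N.choose (l + 1) := by
  have htail := choose_sub_add_mul_choose_sub_le hs hN hl hx
  have hlow := cast_choose_sub_le hs hN (l + 1)
  have hlink := mul_choose_succ_le_mul_choose hN s l
  have hs0 : (0 : ℝ) ≤ s := Nat.cast_nonneg s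
  have hκ' := mul_le_mul_of_nonneg_left hlow (mul_nonneg hs0 (by linarith : 0 ≤ 1 - 2 * κ))
  have hκ'' := mul_le_mul_of_nonneg_left hlink (mul_nonneg hs0 hκ0)
  have hnn : (0 : ℝ) ≤ s * N.choose l := by positivity
  rw [tailRatio]
  linarith

end ChooseTail

section SumByParts

lemma sum_succ_eq_mul_add_sum {T a : ℕ → ℝ} (h : ∀ y, T y = T (y + 1) + a y) (m : ℕ) :
    ∑ y ∈ range m, T (y + 1) = m * T m + ∑ z ∈ range m, (z : ℝ) * a z := by
  induction m with
  | zero => simp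
  | succ m ih =>
    rw [sum_range_succ, sum_range_succ, ih, h m]
    push_cast
    ring

lemma sum_eq_sub {T a : ℕ → ℝ} (h : ∀ y, T y = T (y + 1) + a y) (m : ℕ) :
    ∑ z ∈ range m, a z = T 0 - T m := by
  rw [← sum_range_sub', sum_congr rfl fun z _ => eq_sub_of_add_eq' (h z).symm]

lemma sum_succ_le {T a : ℕ → ℝ} {m : ℕ} {κ : ℝ} (h : ∀ y, T y = T (y + 1) + a y)
    (hκ : ∑ z ∈ range m, (z : ℝ) * a z ≤ κ * m * ∑ z ∈ range m, a z) :
    ∑ y ∈ range m, T (y + 1) ≤ m * ((1 - κ) * T m + κ * T 0) := by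
  rw [sum_eq_sub h] at hκ
  rw [sum_succ_eq_mul_add_sum h]
  linarith

end SumByParts

section BottomLayer

variable {F : Finset (Finset ℕ)} {N s l : ℕ}

lemma ShiftedOn.card_filter_subset_le_add_sum
    (hF : F ⊆ (range (N + s + 1)).powersetCard (l + 1)) (hS : ShiftedOn (range (N + s + 1)) F) :
    #{A ∈ F | A ⊆ Ico (s + 1) (N + s + 1)} ≤ #(tailFamily F (s + 1 + s)) +
      ∑ y ∈ range s,
        #(tailFamily (linkOn F (Ico (s + 1) (N + s + 1)) l s) (s + 1 + (y + 1))) := by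
  set B := {A ∈ F | A ⊆ Ico (s + 1) (N + s + 1)} with hBdef
  have hB : B ⊆ (Ico (s + 1) (N + s + 1)).powersetCard (l + 1) := fun A hA =>
    mem_powersetCard.2 ⟨(mem_filter.1 hA).2, (mem_powersetCard.1 (hF (mem_filter.1 hA).1)).2⟩
  have hshadow := hS.shadow_filter_subset_subset_linkOn hF (i := s) (mem_range.2 (by omega))
    (U := Ico (s + 1) (N + s + 1)) fun u hu => (mem_Ico.1 hu).1
  have hsum := card_tailFamily_le_add_sum hshadow (s + 1) s
  rw [← hBdef, tailFamily_eq_self hB] at hsum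
  have hmono : tailFamily B (s + 1 + s) ⊆ tailFamily F (s + 1 + s) :=
    filter_subset_filter _ (filter_subset _ _)
  exact hsum.trans (Nat.add_le_add_right (card_le_card hmono) _)

/-- `minCount F N s l z` is the number of sets with minimum `s + 1 + z` in the link of `s`, where
`F` consists of `l + 2`-subsets of `range (N + s + 1)`. -/
def minCount (F : Finset (Finset ℕ)) (N s l z : ℕ) : ℕ :=
  #(linkOn (linkOn F (Ico (s + 1) (N + s + 1)) (l + 1) s)
    (Ico (s + 1 + z + 1) (N + s + 1)) l (s + 1 + z))

lemma ShiftedOn.minCount_succ_mul_le (hS : ShiftedOn (range (N + s + 1)) F) {z : ℕ} (hz : z < N) :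
    minCount F N s l (z + 1) * (N + l) ≤ minCount F N s l z * N := by
  have hlink := (hS.mono (fun x hx => mem_range.2 (mem_Ico.1 hx).2)).shiftedOn_linkOn
    (U := Ico (s + 1) (N + s + 1)) (l := l + 1) (i := s) (by simp)
  have := hlink.card_linkOn_succ_mul_le (w := s + 1 + z) (l := l) (mem_Ico.2 (by omega))
  rwa [show N + s + 1 - (s + 1) = N by omega] at this

lemma ShiftedOn.card_filter_subset_le_tailRatio {κ : ℝ}
    (hF : F ⊆ (range (N + s + 1)).powersetCard (l + 2)) (hS : ShiftedOn (range (N + s + 1)) F)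
    (hs : matchingNumber F ≤ s)
    (hE : #(linkOn F (Ico (s + 1) (N + s + 1)) (l + 1) s) + (N - s).choose (l + 1) ≤
      N.choose (l + 1))
    (hN : 0 < N) (hl : (s + 1) * (l + 1) ≤ N + 1) (hx : ((l + 1 : ℕ) : ℝ) * ((s : ℝ) / N) ≤ 0.61)
    (hκ0 : 0 ≤ κ) (hκ : κ ≤ 1 / 2)
    (hmean : ∑ z ∈ range s, (z : ℝ) * minCount F N s l z ≤
      κ * s * ∑ z ∈ range s, (minCount F N s l z : ℝ)) :
    (#{A ∈ F | A ⊆ Ico (s + 1) (N + s + 1)} : ℝ) ≤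
      s * N.choose (l + 1) * tailRatio κ (s / N) (l + 1) + 3 * N.choose (l + 1) := by
  have hsN : s ≤ N := by nlinarith
  set E := linkOn F (Ico (s + 1) (N + s + 1)) (l + 1) s
  set T : ℕ → ℕ := fun y => #(tailFamily E (s + 1 + y)) with hT
  have hT0 : (T 0 : ℝ) + (N - s).choose (l + 1) ≤ N.choose (l + 1) := by
    rw [← tailFamily_eq_self (E := E) linkOn_subset_powersetCard] at hE
    exact_mod_cast hE
  have hTs : (T s : ℝ) + #(belowLineSets s (s + 1) N (l + 1)) ≤ (N - s).choose (l + 1) := by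
    exact_mod_cast hS.card_tailFamily_linkOn_add_le hF hs
  have hsum : ∑ y ∈ range s, (T (y + 1) : ℝ) ≤ s * ((1 - κ) * T s + κ * T 0) := by
    refine sum_succ_le (T := fun y => (T y : ℝ)) (fun y => ?_) hmean
    simp only [hT, minCount]
    exact_mod_cast card_tailFamily_eq_add (E := E) linkOn_subset_powersetCard (s + 1 + y)
  have hbottom : (#{A ∈ F | A ⊆ Ico (s + 1) (N + s + 1)} : ℝ) ≤
      #(tailFamily F (s + 1 + s)) + ∑ y ∈ range s, (T (y + 1) : ℝ) := by
    exact_mod_cast hS.card_filter_subset_le_add_sum hF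
  have htail : (#(tailFamily F (s + 1 + s)) : ℝ) + #(belowLineSets s 0 (N + s + 1) (l + 2)) ≤
      (N - s).choose (l + 2) + (s + 1) * #(belowLineSets s (s + 1) N (l + 1)) :=
    mod_cast hS.card_tailFamily_add_le hF hs
  have hline : (#(belowLineSets s (s + 1) N (l + 1)) : ℝ) + s * N.choose l = N.choose (l + 1) :=
    mod_cast card_belowLineSets s (s + 1) hl
  have hline' : (#(belowLineSets s 0 (N + s + 1) (l + 2)) : ℝ) + s * (N + s + 1).choose (l + 1) =
      (N + s + 1).choose (l + 2) :=
    mod_cast card_belowLineSets s 0 (by nlinarith)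
  have hnum := choose_combination_le_tailRatio hsN hN hl hx hκ0 hκ
  rw [eq_sub_of_add_eq hline] at hTs htail
  rw [eq_sub_of_add_eq hline'] at htail
  have hTs' := mul_le_mul_of_nonneg_left hTs (mul_nonneg (Nat.cast_nonneg s) (by linarith) :
    0 ≤ (s : ℝ) * (1 - κ))
  have hT0' := mul_le_mul_of_nonneg_left hT0 (mul_nonneg (Nat.cast_nonneg s) hκ0)
  linarith

lemma ShiftedOn.card_filter_subset_le_of_lt (hF : F ⊆ (range (N + s + 1)).powersetCard (l + 2))
    (hS : ShiftedOn (range (N + s + 1)) F) (hs : matchingNumber F ≤ s)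
    (hE : #(linkOn F (Ico (s + 1) (N + s + 1)) (l + 1) s) + (N - s).choose (l + 1) ≤
      N.choose (l + 1))
    (hN : 0 < N) (hsN : s ≤ N) (hx : ((l + 1 : ℕ) : ℝ) * ((s : ℝ) / N) ≤ 0.39) :
    (#{A ∈ F | A ⊆ Ico (s + 1) (N + s + 1)} : ℝ) ≤ 0.39 * s * N.choose (l + 1) := by
  have hNr : (0 : ℝ) < N := mod_cast hN
  have hlink : #(linkOn F (Ico (s + 1) (N + s + 1)) (l + 1) s) ≤ s * (N - 1).choose l := by
    have := choose_succ_le_choose_sub_add l hsN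
    omega
  have hchoose : (N : ℝ) * (N - 1).choose l = N.choose (l + 1) * ((l + 1 : ℕ) : ℝ) := by
    have := Nat.add_one_mul_choose_eq (N - 1) l
    rw [Nat.sub_add_cancel hN] at this
    exact mod_cast this
  have hB := hS.card_filter_subset_le hF hs (U := Ico (s + 1) (N + s + 1)) (by omega)
    (fun x hx => mem_range.2 (mem_Ico.1 hx).2) fun u hu => (mem_Ico.1 hu).1
  calc (#{A ∈ F | A ⊆ Ico (s + 1) (N + s + 1)} : ℝ)
      ≤ s * (s * (N - 1).choose l) := mod_cast hB.trans (Nat.mul_le_mul_left s hlink)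
    _ = s * N.choose (l + 1) * (((l + 1 : ℕ) : ℝ) * ((s : ℝ) / N)) := by
        rw [eq_div_of_mul_eq hNr.ne' ((mul_comm _ _).trans hchoose)]
        ring
    _ ≤ s * N.choose (l + 1) * 0.39 := by gcongr
    _ = 0.39 * s * N.choose (l + 1) := by ring

lemma ShiftedOn.sum_mul_minCount_zero_le (hS : ShiftedOn (range (N + s + 1)) F) (hN : 0 < N)
    (hsN : s ≤ N) :
    ∑ z ∈ range s, (z : ℝ) * minCount F N s 0 z ≤
      1 / 2 * s * ∑ z ∈ range s, (minCount F N s 0 z : ℝ) := by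
  refine sum_cast_mul_le_of_antitoneOn (fun z => Nat.cast_nonneg _)
    (antitoneOn_of_add_one_le Set.ordConnected_Iio fun z _ hz _ => Nat.cast_le.2 ?_)
  have hzs : z < s := hz
  exact Nat.le_of_mul_le_mul_right (hS.minCount_succ_mul_le (l := 0) (hzs.trans_le hsN)) hN

lemma ShiftedOn.sum_mul_minCount_le (hS : ShiftedOn (range (N + s + 1)) F) (hN : 0 < N)
    (hsN : s ≤ N) (hl : 1 ≤ l) (hx : 0.39 ≤ ((l + 1 : ℕ) : ℝ) * ((s : ℝ) / N)) :
    ∑ z ∈ range s, (z : ℝ) * minCount F N s l z ≤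
      0.486 * s * ∑ z ∈ range s, (minCount F N s l z : ℝ) := by
  have hNr : (0 : ℝ) < N := mod_cast hN
  have hlr : (1 : ℝ) ≤ l := mod_cast hl
  have hl0 : (0 : ℝ) < ((l + 1 : ℕ) : ℝ) := by positivity
  rw [mul_div_assoc', le_div_iff₀ hNr] at hx
  set D := 2 * (N : ℝ) / ((l + 1 : ℕ) : ℝ) with hD
  have hDpos : 0 < D := by positivity
  have hDs : D ≤ 5.13 * s := by
    rw [hD, div_le_iff₀ hl0]
    linarith
  have hND : (N : ℝ) ≤ l * D := by
    rw [hD, mul_div_assoc', le_div_iff₀ hl0]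
    push_cast
    nlinarith
  refine sum_cast_mul_le_of_mul_sub_le (P := s + D) (fun z => Nat.cast_nonneg _) (by linarith)
    (by linarith) fun z hz => ?_
  have hzs : (z : ℝ) + 1 ≤ s := mod_cast hz
  have hratio : (minCount F N s l (z + 1) : ℝ) * (N + l) ≤ minCount F N s l z * N :=
    mod_cast hS.minCount_succ_mul_le (hz.trans_le hsN)
  have hP0 : 0 ≤ s + D - z - 1 := by linarith
  have hNP : (N : ℝ) ≤ l * (s + D - z - 1) :=
    hND.trans (mul_le_mul_of_nonneg_left (by linarith) (by linarith))
  refine le_of_mul_le_mul_right ?_ hNr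
  have hcount := mul_le_mul_of_nonneg_left hNP
    (Nat.cast_nonneg (minCount F N s l (z + 1)) : (0 : ℝ) ≤ _)
  have hratio' := mul_le_mul_of_nonneg_right hratio hP0
  linarith

lemma ShiftedOn.exists_tailRatio_le (hS : ShiftedOn (range (N + s + 1)) F) (hN : 0 < N)
    (hsN : s ≤ N) (hx : 0.39 ≤ ((l + 1 : ℕ) : ℝ) * ((s : ℝ) / N))
    (hx' : ((l + 1 : ℕ) : ℝ) * ((s : ℝ) / N) ≤ 0.60025) :
    ∃ κ : ℝ, 0 ≤ κ ∧ κ ≤ 1 / 2 ∧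
      ∑ z ∈ range s, (z : ℝ) * minCount F N s l z ≤
        κ * s * ∑ z ∈ range s, (minCount F N s l z : ℝ) ∧
      tailRatio κ (s / N) (l + 1) ≤ 0.3984 := by
  rcases Nat.eq_zero_or_pos l with rfl | hl
  · refine ⟨1 / 2, by norm_num, le_rfl, hS.sum_mul_minCount_zero_le hN hsN, ?_⟩
    rw [Nat.zero_add, Nat.cast_one, one_mul] at hx'
    exact tailRatio_one_le (by linarith)
  · refine ⟨0.486, by norm_num, by norm_num, hS.sum_mul_minCount_le hN hsN hl hx, ?_⟩
    exact tailRatio_le (by positivity) (div_le_one_of_le₀ (mod_cast hsN) N.cast_nonneg) hx hx'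

theorem ShiftedOn.card_filter_subset_le_mul_choose
    (hF : F ⊆ (range (N + s + 1)).powersetCard (l + 2))
    (hS : ShiftedOn (range (N + s + 1)) F) (hs : matchingNumber F ≤ s)
    (hE : #(linkOn F (Ico (s + 1) (N + s + 1)) (l + 1) s) + (N - s).choose (l + 1) ≤
      N.choose (l + 1))
    (hs6 : 10 ^ 6 ≤ s) (hN : 1.666 * (s : ℝ) * (l + 1 : ℕ) ≤ N) :
    (#{A ∈ F | A ⊆ Ico (s + 1) (N + s + 1)} : ℝ) ≤ 0.3985 * s * N.choose (l + 1) := by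
  have hs6r : (10 : ℝ) ^ 6 ≤ s := mod_cast hs6
  have hl1 : (1 : ℝ) ≤ (l + 1 : ℕ) := mod_cast Nat.succ_pos l
  have hsl : (s : ℝ) ≤ s * (l + 1 : ℕ) := le_mul_of_one_le_right (by linarith) hl1
  have hsl' : 10 ^ 6 * ((l + 1 : ℕ) : ℝ) ≤ s * (l + 1 : ℕ) := by gcongr
  have hNr : (0 : ℝ) < N := by linarith
  have hN0 : 0 < N := mod_cast hNr
  have hsN : s ≤ N := by
    have : (s : ℝ) ≤ N := by linarith
    exact mod_cast this
  have hslN : (s + 1) * (l + 1) ≤ N + 1 := by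
    have : ((s : ℝ) + 1) * (l + 1 : ℕ) ≤ N + 1 := by linarith
    exact mod_cast this
  have hx : ((l + 1 : ℕ) : ℝ) * ((s : ℝ) / N) ≤ 0.60025 := by
    rw [mul_div_assoc', div_le_iff₀ hNr]
    linarith
  have hC : (0 : ℝ) ≤ N.choose (l + 1) := Nat.cast_nonneg _
  rcases le_total (((l + 1 : ℕ) : ℝ) * ((s : ℝ) / N)) 0.39 with hx' | hx'
  · refine (hS.card_filter_subset_le_of_lt hF hs hE hN0 hsN hx').trans ?_
    gcongr
    norm_num
  obtain ⟨κ, hκ0, hκ, hmean, hratio⟩ := hS.exists_tailRatio_le (l := l) hN0 hsN hx' hx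
  have hB := hS.card_filter_subset_le_tailRatio hF hs hE hN0 hslN (by linarith) hκ0 hκ hmean
  have hsC : 0 ≤ (s : ℝ) * N.choose (l + 1) := by positivity
  have h3C := mul_le_mul_of_nonneg_right hs6r hC
  linarith [mul_le_mul_of_nonneg_left hratio hsC]

end BottomLayer

section LinkProfile

variable {F : Finset (Finset ℕ)} {U V : Finset ℕ} {N s l t : ℕ}

lemma ShiftedOn.exists_hitProfile (hS : ShiftedOn V F) (hs : matchingNumber F ≤ s)
    (hV : range (s + 1) ⊆ V) (hUV : U ⊆ V) (hU : ∀ u ∈ U, s < u) (ht : t * l ≤ #U) :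
    ∃ x : ℕ → Equiv.Perm U → ℕ, HitProfile s t x fun j => #(linkOn F U l j) / (#U).choose l := by
  obtain ⟨B, hB, hd⟩ := exists_disjoint_blocks (ht.trans_eq (Fintype.card_coe U).symm)
  have hshift : ∀ j ≤ s, ShiftedOn univ (restrictTo U (linkOn F U l j)) := fun j hj =>
    ((hS.mono hUV).shiftedOn_linkOn fun h => (hU j h).not_ge hj).shiftedOn_restrictTo
  have hsub : ∀ j, restrictTo U (linkOn F U l j) ⊆ univ.powersetCard l := fun j =>
    restrictTo_subset_powersetCard linkOn_subset_powersetCard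
  have hcard : ∀ j, #(restrictTo U (linkOn F U l j)) = #(linkOn F U l j) := fun j =>
    card_restrictTo linkOn_subset_powersetCard
  refine ⟨fun j => hitCount B (restrictTo U (linkOn F U l j)), ?_, ?_, ?_, ?_, ?_⟩
  · intro σ i hi j hj hij
    refine hitCount_mono (restrictTo_mono ?_) σ
    exact hS.linkOn_subset_linkOn (hV (mem_range.2 (Nat.lt_succ_of_le hi))) hij
      (fun h => (hU i h).not_ge hi) fun h => (hU j h).not_ge hj
  · exact fun j σ => hitCount_le _ σ
  · refine exists_hitCount_add_le hd fun g hg => ?_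
    obtain ⟨j, hj⟩ := exists_notMem_linkOn (l := l) hs hU
      (g := fun j => (g j).map (.subtype _)) fun i j hij => disjoint_map _ |>.2 (hg hij)
    exact ⟨j, fun h => hj (mem_restrictTo.1 h)⟩
  · intro j _
    have := expect_hitCount hB (hsub j)
    rwa [hcard, Fintype.card_coe] at this
  · intro j hj
    have := (hshift j hj).expect_hitCount_sub_sq_le hB hd (hsub j)
    rwa [hcard, Fintype.card_coe] at this

lemma ShiftedOn.sum_card_linkOn_dichotomy (hS : ShiftedOn V F) (hs : matchingNumber F ≤ s)
    (hV : range (s + 1) ⊆ V) (hUV : U ⊆ V) (hU : ∀ u ∈ U, s < u) (hs16 : 10 ^ 16 ≤ s)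
    (ht : 1.666 * (s : ℝ) ≤ t) (ht' : (t : ℝ) ≤ 1.666 * s + 1) (htU : t * l ≤ #U) :
    ∑ i ∈ range s, (#(linkOn F U l i) : ℝ) + (s + 1) * #(linkOn F U l s) ≤
        s * (#U).choose l ∨
      ∑ i ∈ range s, (#(linkOn F U l i) : ℝ) + (0.3985 * s + 1) * (#U).choose l ≤
        s * (#U).choose l := by
  obtain ⟨x, hx⟩ := hS.exists_hitProfile hs hV hUV hU htU
  have ht0 : 0 < t := by
    have : (10 : ℝ) ^ 16 ≤ s := mod_cast hs16
    have : (0 : ℝ) < t := by linarith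
    exact mod_cast this
  have hC : (0 : ℝ) < (#U).choose l :=
    Nat.cast_pos.2 <| Nat.choose_pos <| (Nat.le_mul_of_pos_left _ ht0).trans htU
  have hsum : (∑ i ∈ range s, (1 - (#(linkOn F U l i) : ℝ) / (#U).choose l)) * (#U).choose l =
      s * (#U).choose l - ∑ i ∈ range s, (#(linkOn F U l i) : ℝ) := by
    rw [sum_sub_distrib, ← sum_div, sub_mul, div_mul_cancel₀ _ hC.ne', sum_const, card_range,
      nsmul_one]
  refine (hx.dichotomy hs16 ht ht').imp (fun h => ?_) fun h => ?_
  · have := mul_le_mul_of_nonneg_right h hC.le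
    rw [hsum, mul_assoc, div_mul_cancel₀ _ hC.ne'] at this
    linarith
  · have := mul_le_mul_of_nonneg_right h hC.le
    rw [hsum] at this
    linarith

lemma ShiftedOn.sum_card_linkOn_add_card_le (hs16 : 10 ^ 16 ≤ s) (ht : 1.666 * (s : ℝ) ≤ t)
    (ht' : (t : ℝ) ≤ 1.666 * s + 1) (htN : t * (l + 1) ≤ N)
    (hF : F ⊆ (range (N + s + 1)).powersetCard (l + 2)) (hS : ShiftedOn (range (N + s + 1)) F)
    (hs : matchingNumber F ≤ s)
    (hE : #(linkOn F (Ico (s + 1) (N + s + 1)) (l + 1) s) + (N - s).choose (l + 1) ≤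
      N.choose (l + 1)) :
    ∑ i ∈ range (s + 1), #(linkOn F (Ico (s + 1) (N + s + 1)) (l + 1) i)
      + #{A ∈ F | A ⊆ Ico (s + 1) (N + s + 1)} ≤ s * N.choose (l + 1) := by
  set U := Ico (s + 1) (N + s + 1) with hUdef
  have hUcard : #U = N := by rw [hUdef, Nat.card_Ico]; omega
  have hU : ∀ u ∈ U, s < u := fun u hu => (mem_Ico.1 hu).1
  have hUV : U ⊆ range (N + s + 1) := fun u hu => mem_range.2 (mem_Ico.1 hu).2
  have hdich := hS.sum_card_linkOn_dichotomy hs (range_subset_range.2 (by omega)) hUV hU hs16 ht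
    ht' (htN.trans_eq hUcard.symm)
  rw [hUcard] at hdich
  rw [sum_range_succ]
  suffices (∑ i ∈ range s, (#(linkOn F U (l + 1) i) : ℝ)) + #(linkOn F U (l + 1) s)
      + #{A ∈ F | A ⊆ U} ≤ s * N.choose (l + 1) from mod_cast this
  rcases hdich with h | h
  · have hbottom : (#{A ∈ F | A ⊆ U} : ℝ) ≤ s * #(linkOn F U (l + 1) s) :=
      mod_cast hS.card_filter_subset_le hF hs (by omega) hUV hU
    linarith
  · have hN : 1.666 * (s : ℝ) * (l + 1 : ℕ) ≤ N :=
      (mul_le_mul_of_nonneg_right ht (Nat.cast_nonneg _)).trans (mod_cast htN)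
    have hbottom := hS.card_filter_subset_le_mul_choose hF hs hE (by omega) hN
    have hlink : (#(linkOn F U (l + 1) s) : ℝ) ≤ N.choose (l + 1) := by
      rw [← hUcard, ← card_powersetCard]
      exact mod_cast card_le_card linkOn_subset_powersetCard
    linarith

end LinkProfile

section Induction

variable {F : Finset (Finset ℕ)} {N n m k s l t : ℕ}

lemma exists_subset_powersetCard_range (hF : F ⊆ (Ico m (N + m)).powersetCard l) :
    ∃ G ⊆ (range N).powersetCard l, matchingNumber G ≤ matchingNumber F ∧ #G = #F := by
  let f : ℕ ↪ ℕ := addRightEmbedding m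
  have hf : (range N).map f = Ico m (N + m) := by
    rw [range_eq_Ico, map_add_right_Ico, zero_add]
  refine ⟨{A ∈ (range N).powersetCard l | A.map f ∈ F}, filter_subset _ _,
    matchingNumber_le fun M hM hd =>
      card_le_matchingNumber_of_map f (fun A hA => (mem_filter.1 (hM hA)).2) hd,
    card_nbij (·.map f) (fun A hA => (mem_filter.1 hA).2) (map_injective f).injOn fun A hA => ?_⟩
  obtain ⟨hAU, hAl⟩ := mem_powersetCard.1 (hF hA)
  rw [← hf, subset_map_iff] at hAU
  obtain ⟨A, hAN, rfl⟩ := hAU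
  rw [card_map] at hAl
  exact ⟨A, mem_coe.2 (mem_filter.2 ⟨mem_powersetCard.2 ⟨hAN, hAl⟩, hA⟩), rfl⟩

lemma ShiftedOn.card_add_choose_le (hs16 : 10 ^ 16 ≤ s) (ht : 1.666 * (s : ℝ) ≤ t)
    (ht' : (t : ℝ) ≤ 1.666 * s + 1) (htN : t * (l + 1) ≤ N)
    (hF : F ⊆ (range (N + s + 1)).powersetCard (l + 2)) (hS : ShiftedOn (range (N + s + 1)) F)
    (hs : matchingNumber F ≤ s)
    (hE : #(linkOn F (Ico (s + 1) (N + s + 1)) (l + 1) s) + (N - s).choose (l + 1) ≤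
      N.choose (l + 1)) :
    #F + (N + 1).choose (l + 2) ≤ (N + s + 1).choose (l + 2) := by
  have hlinks := hS.sum_card_linkOn_add_card_le hs16 ht ht' htN hF hs hE
  have hcount := card_add_choose_le_sum_card_linkOn hF
  have hpascal : (N + 1).choose (l + 2) = N.choose (l + 1) + N.choose (l + 2) :=
    Nat.choose_succ_succ N (l + 1)
  linarith

lemma card_le_of_subset_powersetCard_one (hF : F ⊆ (range n).powersetCard 1)
    (hs : matchingNumber F ≤ s) : #F ≤ s := by
  refine (card_le_matchingNumber Subset.rfl fun A hA B hB hAB => ?_).trans hs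
  obtain ⟨a, rfl⟩ := card_eq_one.1 (mem_powersetCard.1 (hF hA)).2
  obtain ⟨b, rfl⟩ := card_eq_one.1 (mem_powersetCard.1 (hF hB)).2
  exact disjoint_singleton.2 fun h => hAB (h ▸ rfl)

theorem card_add_choose_sub_le {ε : ℝ} (hs16 : 10 ^ 16 ≤ s) (hε : 2 ≤ ε * s)
    (hn : (s : ℝ) + (1.666 + ε) * s * l ≤ n) (hF : F ⊆ (range n).powersetCard (l + 1))
    (hs : matchingNumber F ≤ s) : #F + (n - s).choose (l + 1) ≤ n.choose (l + 1) := by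
  induction l generalizing n F with
  | zero =>
    have hFs := card_le_of_subset_powersetCard_one hF hs
    have hsn : (s : ℝ) ≤ n := by simpa using hn
    rw [Nat.cast_le] at hsn
    simp only [zero_add, Nat.choose_one_right]
    omega
  | succ l ih =>
    have hsr : (10 : ℝ) ^ 16 ≤ s := mod_cast hs16
    have hsl : 0 ≤ (s : ℝ) * l := by positivity
    have hεl : (2 : ℝ) * l ≤ ε * s * l := mul_le_mul_of_nonneg_right hε (Nat.cast_nonneg l)
    push_cast at hn
    obtain ⟨N, rfl⟩ : ∃ N, n = N + (s + 1) := by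
      have : (s : ℝ) + 1 ≤ n := by linarith
      exact Nat.exists_eq_add_of_le' (mod_cast this)
    push_cast at hn
    obtain ⟨G, hG, hGs, hGF, hS⟩ := exists_shiftedOn hF
    obtain ⟨E, hE, hEs, hElink⟩ := exists_subset_powersetCard_range
      (linkOn_subset_powersetCard (F := G) (U := Ico (s + 1) (N + (s + 1))) (l := l + 1) (i := s))
    have hlink := hS.matchingNumber_linkOn_le (l := l + 1) (U := Ico (s + 1) (N + (s + 1)))
      (hGs.trans hs) (by omega) fun u hu => (mem_Ico.1 hu).1
    have hE' := ih (n := N) (by linarith) hE (hEs.trans hlink)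
    have ht : (⌈1.666 * (s : ℝ)⌉₊ : ℝ) ≤ 1.666 * s + 1 := (Nat.ceil_lt_add_one (by positivity)).le
    have htN : ⌈1.666 * (s : ℝ)⌉₊ * (l + 1) ≤ N := by
      have := mul_le_mul_of_nonneg_right ht (by positivity : (0 : ℝ) ≤ l + 1)
      have : (⌈1.666 * (s : ℝ)⌉₊ : ℝ) * (l + 1) ≤ N := by linarith
      exact mod_cast this
    rw [hElink] at hE'
    have := hS.card_add_choose_le hs16 (Nat.le_ceil _) ht htN hG (hGs.trans hs) hE'
    rwa [hGF, ← show N + (s + 1) - s = N + 1 by omega] at this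

end Induction

section Extremal

variable {F : Finset (Finset ℕ)} {n k s : ℕ}

lemma matchingNumber_le_of_forall_exists_lt (h : ∀ A ∈ F, ∃ x ∈ A, x < s) :
    matchingNumber F ≤ s := by
  refine matchingNumber_le fun M hM hd => ?_
  choose! f hfA hfs using fun A hA => h A (hM hA)
  rw [← card_range s]
  refine card_le_card_of_injOn f (fun A hA => mem_coe.2 (mem_range.2 (hfs A hA)))
    fun A hA B hB hAB => by_contra fun hne => ?_
  exact disjoint_left.1 (hd hA hB hne) (hfA A hA) (hAB ▸ hfA B hB)

lemma exists_matchingNumber_le_card_eq (n k s : ℕ) :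
    ∃ F ⊆ (range n).powersetCard k, matchingNumber F ≤ s ∧
      #F = n.choose k - (n - s).choose k := by
  refine ⟨(range n).powersetCard k \ (Ico s n).powersetCard k, sdiff_subset,
    matchingNumber_le_of_forall_exists_lt fun A hA => ?_, ?_⟩
  · rw [mem_sdiff, mem_powersetCard, mem_powersetCard] at hA
    by_contra! hsA
    exact hA.2 ⟨fun x hx => mem_Ico.2 ⟨hsA x hx, mem_range.1 (hA.1.1 hx)⟩, hA.1.2⟩
  · rw [card_sdiff_of_subset (powersetCard_mono fun x hx => mem_range.2 (mem_Ico.1 hx).2),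
      card_powersetCard, card_powersetCard, card_range, Nat.card_Ico]

lemma maxSizeEMC_eq_of_forall_card_add_le
    (h : ∀ F ⊆ (range n).powersetCard k, matchingNumber F ≤ s →
      #F + (n - s).choose k ≤ n.choose k) :
    maxSizeEMC n k s = n.choose k - (n - s).choose k := by
  refine IsGreatest.csSup_eq ⟨exists_matchingNumber_le_card_eq n k s, ?_⟩
  rintro _ ⟨F, hF, hs, rfl⟩
  exact Nat.le_sub_of_add_le (h F hF hs)

end Extremal

theorem erdos_matching_thm1v1 :
    ∀ ε : ℝ, 0 < ε → ∃ s₀ : ℕ, ∀ s k n : ℕ, s₀ ≤ s → 2 ≤ k →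
      (s : ℝ) + (1.666 + ε) * s * ((k : ℝ) - 1) ≤ (n : ℝ) →
      maxSizeEMC n k s = n.choose k - (n - s).choose k := by
  intro ε hε
  refine ⟨max (10 ^ 16) ⌈2 / ε⌉₊, fun s k n hs hk hn => ?_⟩
  obtain ⟨hs16, hsε⟩ := max_le_iff.1 hs
  rw [Nat.ceil_le, div_le_iff₀' hε] at hsε
  obtain ⟨l, rfl⟩ : ∃ l, k = l + 1 := Nat.exists_eq_add_of_le' (one_le_two.trans hk)
  rw [Nat.cast_succ, add_sub_cancel_right] at hn
  exact maxSizeEMC_eq_of_forall_card_add_le fun F hF hFs =>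
    card_add_choose_sub_le hs16 hsε hn hF hFs
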